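/- arXiv:2211.15818 — 4 statements merged into one kernel-verified Lean document; each statement's English description precedes it below -/
import Mathlib

section
/- Let G be a finite pseudo-solvable group. Then the complement of the prime graph of G is 3-colorable: there exists a function c from the prime numbers to a 3-element set such that c(p) ≠ c(q) whenever p and q are distinct primes dividing |G| for which G has no element of order p·q. -/
/-- A finite group is *pseudo-solvable* if it has a subnormal series whose factors are
all cyclic or isomorphic to the alternating group `A₅`. -/
def IsPseudoSolvable (G : Type*) [Group G] : Prop :=
  ∃ (n : ℕ) (H : Fin (n + 1) → Subgroup G),
    H 0 = ⊥ ∧ H (Fin.last n) = ⊤ ∧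
    ∀ i : Fin n, H i.castSucc ≤ H i.succ ∧
      ∃ hN : ((H i.castSucc).subgroupOf (H i.succ)).Normal,
        haveI := hN
        IsCyclic (H i.succ ⧸ (H i.castSucc).subgroupOf (H i.succ)) ∨
        Nonempty ((H i.succ ⧸ (H i.castSucc).subgroupOf (H i.succ)) ≃* alternatingGroup (Fin 5))

namespace PGC
universe u v

open scoped commutatorElement

abbrev A5 : Type := alternatingGroup (Fin 5)

/-- `G` contains an elementary abelian subgroup of order `p ^ 2`. -/
def Rk (p : ℕ) (G : Type*) [Group G] : Prop :=
  ∃ a b : G, orderOf a = p ∧ orderOf b = p ∧ Commute a b ∧ b ∉ Subgroup.zpowers a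

def HasEl (n : ℕ) (G : Type*) [Group G] : Prop := ∃ g : G, orderOf g = n

theorem HasEl.of_dvd {G : Type*} [Group G] [Finite G] {n : ℕ} (g : G) (h : n ∣ orderOf g) :
    HasEl n G :=
  ⟨_, orderOf_pow_orderOf_div (orderOf_pos g).ne' h⟩

theorem HasEl.lift {G H : Type*} [Group G] [Group H] [Finite G] {n : ℕ} (f : G →* H)
    (hf : Function.Surjective f) (h : HasEl n H) : HasEl n G := by
  obtain ⟨y, hy⟩ := h
  obtain ⟨x, rfl⟩ := hf y
  exact HasEl.of_dvd x (hy ▸ orderOf_map_dvd f x)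

theorem HasEl.sub {G : Type*} [Group G] {n : ℕ} {V : Subgroup G} (h : HasEl n V) : HasEl n G := by
  obtain ⟨y, hy⟩ := h
  exact ⟨y, by rw [Subgroup.orderOf_coe, hy]⟩

theorem HasEl.symm {G : Type*} [Group G] {p q : ℕ} (h : HasEl (p * q) G) : HasEl (q * p) G := by
  rwa [mul_comm]

theorem HasEl.of_commute {G : Type*} [Group G] {p q : ℕ} (hp : p.Prime) (hq : q.Prime) (hpq : p ≠ q)
    (a b : G) (ha : orderOf a = p) (hb : orderOf b = q) (h : Commute a b) : HasEl (p * q) G := by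
  refine ⟨a * b, ?_⟩
  rw [h.orderOf_mul_eq_mul_orderOf_of_coprime, ha, hb]
  rw [ha, hb]
  exact (Nat.coprime_primes hp hq).2 hpq

theorem Rk.sub {G : Type*} [Group G] {p : ℕ} {V : Subgroup G} (h : Rk p V) : Rk p G := by
  obtain ⟨a, b, ha, hb, hab, hn⟩ := h
  refine ⟨a, b, by rw [Subgroup.orderOf_coe, ha], by rw [Subgroup.orderOf_coe, hb], ?_, ?_⟩
  · exact congrArg Subtype.val hab
  · rintro ⟨k, hk⟩
    exact hn ⟨k, Subtype.ext (by simpa using hk)⟩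

/-- A homomorphism with kernel of order prime to `p` preserves elements of order `p`. -/
theorem orderOf_map_of_ker {G H : Type*} [Group G] [Group H] [Finite G] {p : ℕ} (hp : p.Prime)
    (f : G →* H) (hk : ¬ p ∣ Nat.card f.ker) (a : G) (ha : orderOf a = p) : orderOf (f a) = p := by
  have h1 : orderOf (f a) ∣ p := ha ▸ orderOf_map_dvd f a
  rcases (Nat.dvd_prime hp).1 h1 with h | h
  · exfalso
    have : a ∈ f.ker := by simpa [orderOf_eq_one_iff] using h
    apply hk
    have h2 := Subgroup.orderOf_dvd_natCard f.ker this
    rwa [ha] at h2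
  · exact h

theorem Rk.map {G H : Type*} [Group G] [Group H] [Finite G] {p : ℕ} (hp : p.Prime)
    (f : G →* H) (hk : ¬ p ∣ Nat.card f.ker) (h : Rk p G) : Rk p H := by
  obtain ⟨a, b, ha, hb, hab, hn⟩ := h
  refine ⟨f a, f b, orderOf_map_of_ker hp f hk a ha, orderOf_map_of_ker hp f hk b hb,
    hab.map f, ?_⟩
  rintro ⟨k, hk'⟩
  have hk' : f a ^ k = f b := hk'
  apply hn
  have hc : (b * a ^ (-k)) ^ p = 1 := by
    rw [(hab.symm.zpow_right (-k)).mul_pow, ← hb, pow_orderOf_eq_one, hb, ← zpow_natCast, ← zpow_mul,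
      mul_comm, zpow_mul, zpow_natCast, ← ha, pow_orderOf_eq_one]; simp
  have : b * a ^ (-k) = 1 := by
    by_contra hne
    have ho := orderOf_eq_prime_iff (hp := ⟨hp⟩) |>.2 ⟨hc, hne⟩
    have h2 := orderOf_map_of_ker hp f hk _ ho
    simp [hk'] at h2
    exact hp.one_lt.ne h2
  refine ⟨k, ?_⟩
  rw [zpow_neg, mul_inv_eq_one] at this
  exact this.symm

theorem Rk.lift {G H : Type*} [Group G] [Group H] [Finite G] {p : ℕ} (hp : p.Prime)
    (f : G →* H) (hf : Function.Surjective f) (hk : ¬ p ∣ Nat.card f.ker) (h : Rk p H) :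
    Rk p G := by
  have : Fact p.Prime := ⟨hp⟩
  have : Finite H := Finite.of_surjective f hf
  obtain ⟨a, b, ha, hb, hab, hn⟩ := h
  -- the subgroup generated by a, b is a p-group
  have hE : IsPGroup p (Subgroup.zpowers a ⊔ Subgroup.zpowers b : Subgroup H) := by
    apply IsPGroup.to_sup_of_normal_right'
    · exact IsPGroup.of_card (n := 1) (by simp [ha])
    · exact IsPGroup.of_card (n := 1) (by simp [hb])
    · rw [Subgroup.zpowers_le]
      rw [Subgroup.mem_normalizer_iff]
      intro h
      constructor
      · rintro ⟨k, rfl⟩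
        refine ⟨k, ?_⟩
        have := (hab.zpow_right k).eq
        simp only
        rw [this]; simp
      · rintro ⟨k, hk⟩
        refine ⟨k, ?_⟩
        have := (hab.zpow_right k).eq
        simp only at hk ⊢
        have h2 : h = a⁻¹ * (a * h * a⁻¹) * a := by group
        rw [h2, ← hk, mul_assoc, ← this]; simp
  obtain ⟨Q, hQ⟩ := hE.exists_le_sylow
  obtain ⟨P, rfl⟩ := Sylow.mapSurjective_surjective hf p Q
  have hQ' : (Subgroup.zpowers a ⊔ Subgroup.zpowers b : Subgroup H) ≤ (P : Subgroup G).map f := hQ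
  have haP := hQ' (Subgroup.mem_sup_left (Subgroup.mem_zpowers a))
  have hbP := hQ' (Subgroup.mem_sup_right (Subgroup.mem_zpowers b))
  obtain ⟨x, hx, rfl⟩ := haP
  obtain ⟨y, hy, rfl⟩ := hbP
  have hinj : ∀ z ∈ (P : Subgroup G), f z = 1 → z = 1 := by
    intro z hz hfz
    obtain ⟨k, hk'⟩ := P.isPGroup' ⟨z, hz⟩
    have h1 : orderOf z ∣ p ^ k := orderOf_dvd_of_pow_eq_one (by simpa using congrArg Subtype.val hk')
    have h2 : orderOf z ∣ Nat.card f.ker := Subgroup.orderOf_dvd_natCard _ hfz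
    have h3 : (p ^ k).Coprime (Nat.card f.ker) := Nat.Coprime.pow_left _ ((hp.coprime_iff_not_dvd).2 hk)
    exact orderOf_eq_one_iff.1 (Nat.eq_one_of_dvd_coprimes h3 h1 h2)
  have hord : ∀ z ∈ (P : Subgroup G), orderOf (f z) = p → orderOf z = p := by
    intro z hz ho
    apply orderOf_eq_prime
    · apply hinj _ (pow_mem hz _)
      rw [map_pow, ← ho, pow_orderOf_eq_one]
    · rintro rfl
      simp at ho
      exact hp.one_lt.ne ho
  refine ⟨x, y, hord x hx ha, hord y hy hb, ?_, ?_⟩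
  · have := hinj (x * y * x⁻¹ * y⁻¹) (mul_mem (mul_mem (mul_mem hx hy) (inv_mem hx)) (inv_mem hy))
      (by simp [hab.eq])
    rw [mul_inv_eq_one, mul_inv_eq_iff_eq_mul] at this
    exact this
  · rintro ⟨k, rfl⟩
    exact hn ⟨k, by simp⟩

theorem not_dvd_ker_mk {G : Type*} [Group G] {N : Subgroup G} [N.Normal] {p : ℕ}
    (h : ¬ p ∣ Nat.card N) : ¬ p ∣ Nat.card (QuotientGroup.mk' N).ker := by
  rwa [QuotientGroup.ker_mk']

/-- If `g` normalizes `⟨z⟩`, commutators of such elements centralize `z`. -/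
theorem commutator_centralizes {G : Type*} [Group G] (z : G) (y : G)
    (M : Subgroup G) (hM : M ≤ Subgroup.normalizer (Subgroup.zpowers z : Set G))
    (hy : y ∈ ⁅M, M⁆) : Commute z y := by
  let Z := Subgroup.zpowers z
  let e := IsCyclic.mulAutMulEquiv Z
  let φ : Subgroup.normalizer (Z : Set G) →* (ZMod (Nat.card Z))ˣ :=
    e.toMonoidHom.comp Z.normalizerMonoidHom
  have h1 : ⁅M, M⁆ ≤ (φ.ker).map (Subgroup.subtype _) := by
    rw [Subgroup.commutator_le]
    intro a ha b hb
    refine ⟨⁅(⟨a, hM ha⟩ : Subgroup.normalizer (Z : Set G)), ⟨b, hM hb⟩⁆, ?_, rfl⟩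
    apply Abelianization.commutator_subset_ker φ
    exact Subgroup.commutator_mem_commutator (Subgroup.mem_top _) (Subgroup.mem_top _)
  obtain ⟨w, hw, rfl⟩ := h1 hy
  have hw2 : Z.normalizerMonoidHom w = 1 := by
    have : e (Z.normalizerMonoidHom w) = 1 := hw
    simpa using this
  have h3 := congrArg (fun α : MulAut Z => ((α ⟨z, Subgroup.mem_zpowers z⟩ : Z) : G)) hw2
  have h4 : (w : G) * z * (w : G)⁻¹ = z := h3
  rw [mul_inv_eq_iff_eq_mul] at h4
  exact h4.symm

theorem card_A5 : Nat.card A5 = 60 := by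
  rw [nat_card_alternatingGroup]; simp [Nat.factorial]

theorem comm_A5 : ⁅(⊤ : Subgroup A5), (⊤ : Subgroup A5)⁆ = ⊤ :=
  commutator_alternatingGroup_eq_top (by simp)

theorem simple_A5 : IsSimpleGroup A5 := alternatingGroup.isSimpleGroup (by simp)

theorem dvd60 {l : ℕ} (hl : l = 2 ∨ l = 3 ∨ l = 5) : l ∣ 60 := by
  rcases hl with rfl | rfl | rfl <;> norm_num

theorem prime_of_l {l : ℕ} (hl : l = 2 ∨ l = 3 ∨ l = 5) : l.Prime := by
  rcases hl with rfl | rfl | rfl <;> norm_num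

theorem of_dvd60 {l : ℕ} (h : l.Prime) (hl : l ∣ 60) : l = 2 ∨ l = 3 ∨ l = 5 := by
  have h60 : 60 = 2 * 2 * 3 * 5 := by norm_num
  rw [h60, h.dvd_mul, h.dvd_mul, h.dvd_mul, Nat.prime_dvd_prime_iff_eq h (by norm_num),
    Nat.prime_dvd_prime_iff_eq h (by norm_num), Nat.prime_dvd_prime_iff_eq h (by norm_num)] at hl
  tauto

theorem card_ker_A5 {V : Type*} [Group V] [Finite V] (f : V →* A5) (hf : Function.Surjective f) :
    Nat.card V = 60 * Nat.card f.ker := by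
  rw [← card_A5, ← f.ker.index_mul_card, Subgroup.index_ker, MonoidHom.range_eq_top.2 hf,
    Subgroup.card_top]

theorem dvd_map {V : Type*} [Group V] (f : V →* A5) (K : Subgroup V) (h : K.map f = ⊤) :
    60 ∣ Nat.card K := by
  have h1 : Nat.card (K.map f) ∣ Nat.card K := K.card_map_dvd f
  rw [h, Subgroup.card_top, card_A5] at h1
  exact h1

theorem b1 {V : Type*} [Group V] [Finite V] (f : V →* A5) (hf : Function.Surjective f) {r l : ℕ}
    (hr : r.Prime) (hl : l = 2 ∨ l = 3 ∨ l = 5) (hne : l ≠ r) (hd : r ∣ Nat.card f.ker)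
    (hR : ¬ Rk r V) : HasEl (l * r) V := by
  have : Fact r.Prime := ⟨hr⟩
  have : Fact l.Prime := ⟨prime_of_l hl⟩
  obtain ⟨R⟩ : Nonempty (Sylow r f.ker) := inferInstance
  have hfr := Sylow.normalizer_sup_eq_top R
  set W : Subgroup V := (R : Subgroup f.ker).map f.ker.subtype with hW
  have hWp : IsPGroup r W := R.isPGroup'.map _
  have hWd : r ∣ Nat.card W := by
    rw [hW, Subgroup.card_map_of_injective (Subgroup.subtype_injective _)]
    exact R.dvd_card_of_dvd_card hd
  have : Nontrivial W := Finite.one_lt_card_iff_nontrivial.1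
    (lt_of_lt_of_le hr.one_lt (Nat.le_of_dvd Nat.card_pos hWd))
  have hcen : Nontrivial (Subgroup.center W) := hWp.center_nontrivial
  have hcd : r ∣ Nat.card (Subgroup.center W) := by
    obtain ⟨n, hn, hcard⟩ := (hWp.to_subgroup (Subgroup.center W)).nontrivial_iff_card.1 hcen
    rw [hcard]; exact dvd_pow_self _ (by omega)
  obtain ⟨z, hz⟩ := exists_prime_orderOf_dvd_card' r hcd
  have hz' : orderOf (z : V) = r := by
    rw [Subgroup.orderOf_coe, Subgroup.orderOf_coe, hz]
  have huniq : ∀ y ∈ W, orderOf y = r → y ∈ Subgroup.zpowers (z : V) := by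
    intro y hy ho
    by_contra hn
    refine hR ⟨z, y, hz', ho, ?_, hn⟩
    have := Subgroup.mem_center_iff.1 z.2 ⟨y, hy⟩
    exact (congrArg Subtype.val this).symm
  have hM : Subgroup.normalizer (W : Set V) ≤ Subgroup.normalizer (Subgroup.zpowers (z : V) : Set V) := by
    have key : ∀ n ∈ Subgroup.normalizer (W : Set V), ∀ h ∈ Subgroup.zpowers (z : V),
        n * h * n⁻¹ ∈ Subgroup.zpowers (z : V) := by
      intro n hn h hh
      have h1 : n * z * n⁻¹ ∈ Subgroup.zpowers (z : V) := by
        apply huniq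
        · exact (Subgroup.mem_normalizer_iff.1 hn _).1 z.1.2
        · have := orderOf_injective (MulAut.conj n).toMonoidHom (MulAut.conj n).injective (z : V)
          rw [hz'] at this
          simpa using this
      obtain ⟨k, rfl⟩ := hh
      have : n * (z : V) ^ k * n⁻¹ = (n * z * n⁻¹) ^ k := by simp
      simp only [this]
      exact zpow_mem h1 k
    intro n hn
    rw [Subgroup.mem_normalizer_iff]
    intro h
    refine ⟨key n hn h, fun hh => ?_⟩
    have := key n⁻¹ (inv_mem hn) _ hh
    simpa [mul_assoc] using this
  set M := Subgroup.normalizer (W : Set V) with hMdef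
  have hmap : M.map f = ⊤ := by
    have := congrArg (Subgroup.map f) hfr
    rw [Subgroup.map_sup, Subgroup.map_top_of_surjective f hf,
      (Subgroup.map_eq_bot_iff f.ker).2 le_rfl] at this
    simpa using this
  have hmap2 : Subgroup.map f ⁅M, M⁆ = ⊤ := by
    rw [Subgroup.map_commutator, hmap, comm_A5]
  have hdv : l ∣ Nat.card (⁅M, M⁆ : Subgroup V) := by
    exact (dvd60 hl).trans (dvd_map f _ hmap2)
  obtain ⟨y, hy⟩ := exists_prime_orderOf_dvd_card' l hdv
  have hcomm := commutator_centralizes (z : V) y M hM y.2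
  exact HasEl.of_commute (prime_of_l hl) hr hne y z (by rw [Subgroup.orderOf_coe, hy]) hz' hcomm.symm

theorem conj_pow_prod {G A : Type*} [Group G] [Group A] {V : Subgroup G} [hV : V.Normal]
    (f : V →* A) (x : G) (m : V) (n : ℕ) :
    ∃ w : V, (w : G) * x ^ n = ((m : G) * x) ^ n ∧
      f w = ((List.range n).map fun i => f (MulAut.conjNormal (x ^ i) m)).prod := by
  induction n with
  | zero => exact ⟨1, by simp, by simp⟩
  | succ n ih =>
    obtain ⟨w, hw, hfw⟩ := ih
    refine ⟨w * MulAut.conjNormal (x ^ n) m, ?_, ?_⟩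
    · rw [pow_succ ((m : G) * x), ← hw]
      simp only [Subgroup.coe_mul, MulAut.conjNormal_apply]
      rw [pow_succ]; group
    · rw [map_mul, hfw, List.range_succ, List.map_append, List.prod_append]
      simp

theorem cardA (l : ℕ) (hl : l = 2 ∨ l = 3 ∨ l = 5) :
    Nat.card {c : A5 // c ^ l = 1 ∧ c ≠ 1} ∣ 600 ^ 2 := by
  have h2 : Nat.card {c : A5 // c^2=1 ∧ c ≠ 1} = 15 := by
    rw [Nat.card_eq_fintype_card]; decide +kernel
  have h3 : Nat.card {c : A5 // c^3=1 ∧ c ≠ 1} = 20 := by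
    rw [Nat.card_eq_fintype_card]; decide +kernel
  have h5 : Nat.card {c : A5 // c^5=1 ∧ c ≠ 1} = 24 := by
    rw [Nat.card_eq_fintype_card]; decide +kernel
  rcases hl with rfl | rfl | rfl
  · rw [h2]; norm_num
  · rw [h3]; norm_num
  · rw [h5]; norm_num

/-- An automorphism of prime order `r ≥ 7` fixes an element of order `l`. -/
theorem fixA (l r : ℕ) (hl : l = 2 ∨ l = 3 ∨ l = 5) (hr : r.Prime) (h7 : ¬ r ∣ 60)
    (α : A5 → A5) (hα : ∀ c, α^[r] c = c) (hm : ∀ c d, α (c * d) = α c * α d) :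
    ∃ c : A5, orderOf c = l ∧ α c = c := by
  have : Fact r.Prime := ⟨hr⟩
  have : Fact l.Prime := ⟨prime_of_l hl⟩
  let a : A5 →* A5 := MonoidHom.mk' α hm
  have hinj : Function.Injective α := by
    intro c d h
    rw [← hα c, ← hα d]
    obtain ⟨k, rfl⟩ : ∃ k, r = k + 1 := ⟨r - 1, by have := hr.pos; omega⟩
    rw [Function.iterate_succ_apply, Function.iterate_succ_apply, h]
  let S := {c : A5 // c ^ l = 1 ∧ c ≠ 1}
  have hS : ∀ c : A5, (c ^ l = 1 ∧ c ≠ 1) → (α c ^ l = 1 ∧ α c ≠ 1) := by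
    rintro c ⟨h1, h2⟩
    refine ⟨?_, ?_⟩
    · have : a c ^ l = 1 := by rw [← map_pow, h1, map_one]
      exact this
    · intro h
      apply h2
      apply hinj
      rw [h]
      exact (map_one a).symm
  let s : S → S := fun c => ⟨α c.1, hS c.1 c.2⟩
  have hs : Function.Injective s := fun c d h => Subtype.ext (hinj (congrArg Subtype.val h))
  let σ : Equiv.Perm S := Equiv.ofBijective s (Finite.injective_iff_bijective.1 hs)
  have hit : ∀ n (c : S), ((σ ^ n) c).1 = α^[n] c.1 := by
    intro n
    induction n with
    | zero => intro c; rfl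
    | succ n ih =>
      intro c
      rw [pow_succ, Equiv.Perm.mul_apply, ih, Function.iterate_succ_apply]; rfl
  have hσ : σ ^ r ^ 1 = 1 := by
    ext1 c
    apply Subtype.ext
    rw [pow_one, hit, hα]; rfl
  have hnd : ¬ r ∣ Fintype.card S := by
    rw [← Nat.card_eq_fintype_card]
    intro h
    have h1 : r ∣ 600 ^ 2 := h.trans (cardA l hl)
    have h2 : r ∣ 60 * 10 := hr.dvd_of_dvd_pow h1
    rcases hr.dvd_mul.1 h2 with h | h
    · exact h7 h
    · exact h7 (h.trans (by norm_num))
  obtain ⟨c, hc⟩ := Equiv.Perm.exists_fixed_point_of_prime hnd hσ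
  exact ⟨c.1, orderOf_eq_prime c.2.1 c.2.2, congrArg Subtype.val hc⟩

theorem inf_map_top {V : Type*} [Group V] (f : V →* A5) (Q : ℕ → Subgroup V)
    (hN : ∀ i, (Q i).Normal) (n : ℕ) (h : ∀ i, i < n → (Q (i + 1)).map f = ⊤)
    (hf : Function.Surjective f) :
    ∃ M : Subgroup V, M.Normal ∧ M.map f = ⊤ ∧ ∀ i, i < n → M ≤ Q (i + 1) := by
  induction n with
  | zero => exact ⟨⊤, inferInstance, Subgroup.map_top_of_surjective f hf, by simp⟩
  | succ n ih =>
    obtain ⟨M, hM, hMf, hMl⟩ := ih (fun i hi => h i (by omega))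
    have := hN (n + 1)
    refine ⟨⁅M, Q (n + 1)⁆, inferInstance, ?_, ?_⟩
    · rw [Subgroup.map_commutator, hMf, h n (by omega), comm_A5]
    · intro i hi
      rcases Nat.lt_succ_iff_lt_or_eq.1 hi with h' | rfl
      · exact (Subgroup.commutator_le_left M _).trans (hMl i h')
      · exact Subgroup.commutator_le_right M _

theorem b2 {G : Type*} [Group G] [Finite G] (V : Subgroup G) [hV : V.Normal] (f : V →* A5)
    (hf : Function.Surjective f) {r l : ℕ}
    (hr : r.Prime) (h7 : ¬ r ∣ 60) (hl : l = 2 ∨ l = 3 ∨ l = 5) (hd : r ∣ Nat.card G)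
    (hdV : ¬ r ∣ Nat.card V) : HasEl (l * r) G := by
  have : Fact r.Prime := ⟨hr⟩
  have hlp := prime_of_l hl
  have : Fact l.Prime := ⟨hlp⟩
  have hlr : l ≠ r := by rintro rfl; exact h7 (dvd60 hl)
  obtain ⟨x, hx⟩ := exists_prime_orderOf_dvd_card' r hd
  have hxr : x ^ r = 1 := by rw [← hx, pow_orderOf_eq_one]
  -- finishing criterion
  have fin : ∀ m : V, orderOf (((List.range r).map
      fun i => f (MulAut.conjNormal (x ^ i) m)).prod) = l → HasEl (l * r) G := by
    intro m hm
    obtain ⟨w, hw, hfw⟩ := conj_pow_prod f x m r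
    rw [← hfw] at hm
    rw [hxr, mul_one] at hw
    apply HasEl.of_dvd ((m : G) * x)
    apply Nat.Coprime.mul_dvd_of_dvd_of_dvd ((Nat.coprime_primes hlp hr).2 hlr)
    · have h1 : l ∣ orderOf w := hm ▸ orderOf_map_dvd f w
      rw [← Subgroup.orderOf_coe, hw] at h1
      exact h1.trans (orderOf_pow_dvd r)
    · have h1 : orderOf (QuotientGroup.mk' V x) = r :=
        orderOf_map_of_ker hr _ (not_dvd_ker_mk hdV) x hx
      have h2 : QuotientGroup.mk' V ((m : G) * x) = QuotientGroup.mk' V x := by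
        rw [map_mul]
        have : QuotientGroup.mk' V (m : G) = 1 := by simp
        rw [this, one_mul]
      rw [← h1, ← h2]
      exact orderOf_map_dvd _ _
  let c : G →* MulAut V := MulAut.conjNormal
  have hcr : c x ^ r = 1 := by rw [← map_pow, hxr, map_one]
  by_cases hA : ∀ v : V, f v = 1 → f (c x v) = 1
  · -- the kernel is invariant
    let g : V →* A5 := f.comp (c x).toMonoidHom
    have hker : f.ker ≤ g.ker := fun v hv => hA v hv
    let α : A5 →* A5 := f.liftOfSurjective hf ⟨g, hker⟩
    have hα : ∀ v, α (f v) = f (c x v) := fun v =>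
      MonoidHom.liftOfRightInverse_comp_apply f _ _ ⟨g, hker⟩ v
    have hαn : ∀ n v, α^[n] (f v) = f ((c x ^ n) v) := by
      intro n
      induction n with
      | zero => intro v; rfl
      | succ n ih =>
        intro v
        rw [Function.iterate_succ_apply, hα, ih, pow_succ]; rfl
    obtain ⟨d, hd1, hd2⟩ := fixA l r hl hr h7 α (by
      intro d
      obtain ⟨v, rfl⟩ := hf d
      rw [hαn, hcr]; rfl) (map_mul α)
    obtain ⟨m, rfl⟩ := hf d
    apply fin m
    have : (List.range r).map (fun i => f (MulAut.conjNormal (x ^ i) m)) =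
        List.replicate r (f m) := by
      rw [List.eq_replicate_iff]
      refine ⟨by simp, ?_⟩
      intro b hb
      obtain ⟨i, -, rfl⟩ := List.mem_map.1 hb
      have h1 : f (MulAut.conjNormal (x ^ i) m) = f ((c x ^ i) m) := by rw [← map_pow]
      rw [h1, ← hαn]
      exact Function.iterate_fixed hd2 i
    rw [this, List.prod_replicate, orderOf_pow, hd1, (Nat.coprime_primes hlp hr).2 hlr,
      Nat.div_one]
  · let Q : ℕ → Subgroup V := fun i => (f.comp (c (x ^ i)).toMonoidHom).ker
    have hQ : ∀ i v, v ∈ Q i ↔ f (c (x ^ i) v) = 1 := fun i v => Iff.rfl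
    have hQt : ∀ i, i < r - 1 → (Q (i + 1)).map f = ⊤ := by
      intro i hi
      have hsimp := simple_A5
      have hn : ((Q (i + 1)).map f).Normal := Subgroup.Normal.map inferInstance f hf
      rcases hsimp.eq_bot_or_eq_top_of_normal _ hn with h | h
      · exfalso
        apply hA
        have hle : ∀ v, f (c (x ^ (i + 1)) v) = 1 → f v = 1 := by
          intro v hv
          have : f v ∈ (Q (i + 1)).map f := ⟨v, hv, rfl⟩
          rw [h] at this
          simpa using this
        have hle2 : ∀ k v, f (c (x ^ ((i + 1) * k)) v) = 1 → f v = 1 := by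
          intro k
          induction k with
          | zero => intro v hv; simpa using hv
          | succ k ih =>
            intro v hv
            apply hle
            apply ih
            rw [← MulAut.mul_apply, ← map_mul, ← pow_add]
            exact hv
        have hco : (i + 1).Coprime r := by
          rw [Nat.coprime_comm, hr.coprime_iff_not_dvd]
          intro h
          have := Nat.le_of_dvd (by omega) h
          omega
        obtain ⟨k, hk⟩ : ∃ k, (i + 1) * k ≡ r - 1 [MOD r] := by
          obtain ⟨k, hk⟩ := Nat.exists_mul_mod_eq_one_of_coprime hco hr.one_lt
          refine ⟨k * (r - 1), ?_⟩
          have : (i + 1) * k ≡ 1 [MOD r] := by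
            rw [Nat.ModEq, hk.2, Nat.mod_eq_of_lt hr.one_lt]
          simpa [mul_assoc] using this.mul_right (r - 1)
        have hxk : x ^ ((i + 1) * k) * x = 1 := by
          rw [← pow_succ, ← orderOf_dvd_iff_pow_eq_one, hx]
          have := hk.add_right 1
          rw [Nat.sub_add_cancel hr.one_lt.le] at this
          exact (Nat.modEq_zero_iff_dvd.1 (this.trans (by simp [Nat.ModEq])))
        intro v hv
        apply hle2 k
        rw [← MulAut.mul_apply, ← map_mul, hxk]
        simpa using hv
      · exact h
    obtain ⟨M, hMn, hMt, hMl⟩ := inf_map_top f Q (fun i => inferInstance) (r - 1) hQt hf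
    obtain ⟨d, hd⟩ : ∃ d : A5, orderOf d = l :=
      exists_prime_orderOf_dvd_card' l (by rw [card_A5]; exact dvd60 hl)
    have : d ∈ M.map f := by rw [hMt]; trivial
    obtain ⟨m, hm, rfl⟩ := this
    apply fin m
    have hr1 : r = (r - 1) + 1 := by have := hr.one_lt; omega
    have : ((List.range r).map fun i => f (MulAut.conjNormal (x ^ i) m)).prod = f m := by
      rw [hr1, List.range_succ_eq_map, List.map_cons, List.prod_cons, List.map_map,
        List.prod_eq_one]
      · simp
      · intro b hb
        obtain ⟨i, hi, rfl⟩ := List.mem_map.1 hb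
        exact hMl i (List.mem_range.1 hi) hm
    rw [this, hd]

/-- Groups built from the trivial group by extensions with abelian or `A₅` quotients. -/
inductive PS : (G : Type u) → [Group G] → Prop
  | triv (G : Type u) [Group G] (h : Subsingleton G) : PS G
  | ab (G : Type u) [Group G] (N : Subgroup G) (hc : commutator G ≤ N) (hN : PS N) : PS G
  | a5 (G : Type u) [Group G] (f : G →* A5) (hf : Function.Surjective f) (hN : PS f.ker) : PS G

theorem PS.quot {G : Type u} [Group G] (h : PS G) : ∀ {H : Type u} [Group H] (φ : G →* H),
    Function.Surjective φ → PS H := by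
  induction h with
  | triv G h =>
    intro H _ φ hφ
    exact PS.triv H hφ.subsingleton
  | ab G N hc hN ih =>
    intro H _ φ hφ
    refine PS.ab H (N.map φ) ?_ (ih (φ.subgroupMap N) (φ.subgroupMap_surjective N))
    rw [commutator_def, ← Subgroup.map_top_of_surjective φ hφ, ← Subgroup.map_commutator]
    exact Subgroup.map_mono hc
  | a5 G f hf hN ih =>
    intro H _ φ hφ
    have hsimp := simple_A5
    have hn : ((φ.ker).map f).Normal := Subgroup.Normal.map inferInstance f hf
    rcases hsimp.eq_bot_or_eq_top_of_normal _ hn with h | h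
    · have hle : φ.ker ≤ f.ker := (Subgroup.map_eq_bot_iff φ.ker).1 h
      let g : H →* A5 := φ.liftOfSurjective hφ ⟨f, hle⟩
      have hg : ∀ x, g (φ x) = f x := fun x =>
        MonoidHom.liftOfRightInverse_comp_apply φ _ _ ⟨f, hle⟩ x
      refine PS.a5 H g ?_ ?_
      · intro c
        obtain ⟨x, rfl⟩ := hf c
        exact ⟨φ x, hg x⟩
      · refine ih ((φ.comp f.ker.subtype).codRestrict g.ker ?_) ?_
        · intro x
          exact (hg x).trans x.2
        · rintro ⟨y, hy⟩
          obtain ⟨x, rfl⟩ := hφ y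
          exact ⟨⟨x, (hg x).symm.trans hy⟩, rfl⟩
    · refine ih (φ.comp f.ker.subtype) ?_
      intro y
      obtain ⟨x, rfl⟩ := hφ y
      have : f x ∈ (φ.ker).map f := by rw [h]; trivial
      obtain ⟨k, hk, hkx⟩ := this
      have hk1 : φ k = 1 := hk
      refine ⟨⟨x * k⁻¹, ?_⟩, ?_⟩
      · rw [MonoidHom.mem_ker, map_mul, map_inv, hkx, mul_inv_cancel]
      · simp [hk1]

theorem comm_subgroupOf {G : Type*} [Group G] {V N : Subgroup G} (hle : V ≤ N) (hp : ⁅V, V⁆ = V) :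
    ⁅V.subgroupOf N, V.subgroupOf N⁆ = V.subgroupOf N := by
  apply Subgroup.map_injective N.subtype_injective
  rw [Subgroup.map_commutator, Subgroup.subgroupOf_map_subtype, inf_eq_left.2 hle, hp]

theorem PS.perfect {G : Type u} [Group G] (h : PS G) : ∀ V : Subgroup G, V.Normal → ⁅V, V⁆ = V →
    V ≠ ⊥ → ∃ f : V →* A5, Function.Surjective f := by
  have aux : ∀ {G : Type u} [Group G] (V N : Subgroup G), V ≤ N → V.Normal → ⁅V, V⁆ = V → V ≠ ⊥ →
      (∀ V : Subgroup N, V.Normal → ⁅V, V⁆ = V →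
        V ≠ ⊥ → ∃ f : V →* A5, Function.Surjective f) → 
      ∃ f : V →* A5, Function.Surjective f := by
    intro G _ V N hle hn hp hb ih
    obtain ⟨f, hf⟩ := ih (V.subgroupOf N) inferInstance (comm_subgroupOf hle hp) (by
      intro h
      rw [Subgroup.subgroupOf_eq_bot, disjoint_iff, inf_eq_left.2 hle] at h
      exact hb h)
    exact ⟨f.comp (Subgroup.subgroupOfEquivOfLe hle).symm.toMonoidHom,
      hf.comp (Subgroup.subgroupOfEquivOfLe hle).symm.surjective⟩
  induction h with
  | triv G h =>
    intro V _ _ hb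
    exact absurd (Subsingleton.elim _ _) hb
  | ab G N hc hN ih =>
    intro V hn hp hb
    refine aux V N ?_ hn hp hb ih
    rw [← hp]
    exact (Subgroup.commutator_mono le_top le_top).trans hc
  | a5 G f hf hN ih =>
    intro V hn hp hb
    have hsimp := simple_A5
    have hn' : (V.map f).Normal := Subgroup.Normal.map inferInstance f hf
    rcases hsimp.eq_bot_or_eq_top_of_normal _ hn' with h | h
    · exact aux V f.ker ((Subgroup.map_eq_bot_iff V).1 h) hn hp hb ih
    · refine ⟨f.comp V.subtype, ?_⟩
      intro c
      have : c ∈ V.map f := by rw [h]; trivial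
      obtain ⟨x, hx, rfl⟩ := this
      exact ⟨⟨x, hx⟩, rfl⟩

theorem PS.of_pseudo {G : Type u} [Group G] (h : IsPseudoSolvable G) : PS G := by
  obtain ⟨n, H, h0, hl, hs⟩ := h
  have key : ∀ i, PS (H i) := by
    intro i
    induction i using Fin.induction with
    | zero => rw [h0]; exact PS.triv _ inferInstance
    | succ i ih =>
      obtain ⟨hle, hN, hq⟩ := hs i
      have hK : PS ((H i.castSucc).subgroupOf (H i.succ)) :=
        ih.quot (Subgroup.subgroupOfEquivOfLe hle).symm.toMonoidHom
          (Subgroup.subgroupOfEquivOfLe hle).symm.surjective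
      rcases hq with hc | ⟨⟨e⟩⟩
      · refine PS.ab _ _ ?_ hK
        let _ : CommGroup (H i.succ ⧸ (H i.castSucc).subgroupOf (H i.succ)) := IsCyclic.commGroup
        have := Abelianization.commutator_subset_ker
          (QuotientGroup.mk' ((H i.castSucc).subgroupOf (H i.succ)))
        rwa [QuotientGroup.ker_mk'] at this
      · let f : H i.succ →* A5 := e.toMonoidHom.comp (QuotientGroup.mk' _)
        have hk : f.ker = (H i.castSucc).subgroupOf (H i.succ) := by
          ext x
          simp [f]
        refine PS.a5 _ f (e.surjective.comp (QuotientGroup.mk'_surjective _)) ?_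
        rw [hk]; exact hK
  have := key (Fin.last n)
  rw [hl] at this
  exact this.quot (Subgroup.topEquiv (G := G)).toMonoidHom Subgroup.topEquiv.surjective

theorem solvable_of_comm {G : Type*} [Group G] (V : Subgroup G)
    (h : Group.IsSolvable (⁅V, V⁆ : Subgroup G)) : Group.IsSolvable V := by
  have hle : ⁅V, V⁆ ≤ V := Subgroup.commutator_le_self V
  have : Group.IsSolvable (Abelianization V) := inferInstance
  refine Group.isSolvable_of_ker_le_range (Subgroup.inclusion hle) (Abelianization.of (G := V)) ?_
  rw [Abelianization.ker_of]
  intro x hx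
  have hx2 : (x : G) ∈ ⁅V, V⁆ := by
    rw [← Subgroup.map_subtype_commutator]
    exact ⟨x, hx, rfl⟩
  exact ⟨⟨x, hx2⟩, rfl⟩

theorem exists_V {G : Type u} [Group G] [Finite G] (h : PS G) (hns : ¬ Group.IsSolvable G) :
    ∃ V : Subgroup G, V.Normal ∧ ∃ f : V →* A5, Function.Surjective f := by
  obtain ⟨V, ⟨hVn, hVs⟩, hmin⟩ := WellFounded.has_min (wellFounded_lt (α := Subgroup G))
    {V | V.Normal ∧ ¬ Group.IsSolvable V} ⟨⊤, inferInstance, fun hs =>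
      hns (Group.isSolvable_of_surjective (f := (Subgroup.topEquiv (G := G)).toMonoidHom) Subgroup.topEquiv.surjective)⟩
  have hle : ⁅V, V⁆ ≤ V := Subgroup.commutator_le_self V
  have hp : ⁅V, V⁆ = V := by
    by_contra hne
    exact hmin ⁅V, V⁆ ⟨inferInstance, fun hs => hVs (solvable_of_comm V hs)⟩ (lt_of_le_of_ne hle hne)
  refine ⟨V, hVn, h.perfect V hVn hp ?_⟩
  rintro rfl
  exact hVs inferInstance

theorem minN {G : Type u} [Group G] [Finite G] [Nontrivial G] (h : PS G) :
    ∃ N : Subgroup G, N.Normal ∧ N ≠ ⊥ ∧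
      ((∃ p : ℕ, p.Prime ∧ (∀ x ∈ N, x ^ p = 1) ∧ ∀ x ∈ N, ∀ y ∈ N, x * y = y * x) ∨
       (∃ f : N →* A5, Function.Surjective f ∧ ∀ r : ℕ, r.Prime → r ∣ Nat.card N → r ∣ 60)) := by
  obtain ⟨N, ⟨hNn, hNb⟩, hmin⟩ := WellFounded.has_min (wellFounded_lt (α := Subgroup G))
    {V | V.Normal ∧ V ≠ ⊥} ⟨⊤, inferInstance, top_ne_bot⟩
  by_cases hc : ⁅N, N⁆ = ⊥
  · have hcomm : ∀ x ∈ N, ∀ y ∈ N, x * y = y * x := by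
      intro x hx y hy
      have : ⁅x, y⁆ ∈ ⁅N, N⁆ := Subgroup.commutator_mem_commutator hx hy
      rw [hc, Subgroup.mem_bot] at this
      exact commutatorElement_eq_one_iff_mul_comm.1 this
    have : Nontrivial N := (Subgroup.nontrivial_iff_ne_bot N).2 hNb
    obtain ⟨p, hp, hd⟩ := Nat.exists_prime_and_dvd (Finite.one_lt_card (α := N)).ne'
    have : Fact p.Prime := ⟨hp⟩
    obtain ⟨z, hz⟩ := exists_prime_orderOf_dvd_card' p hd
    let T : Subgroup G :=
      { carrier := {x | x ∈ N ∧ x ^ p = 1}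
        one_mem' := ⟨one_mem N, one_pow p⟩
        mul_mem' := by
          rintro a b ⟨ha, ha'⟩ ⟨hb, hb'⟩
          refine ⟨mul_mem ha hb, ?_⟩
          rw [Commute.mul_pow (hcomm a ha b hb), ha', hb', one_mul]
        inv_mem' := by
          rintro a ⟨ha, ha'⟩
          exact ⟨inv_mem ha, by rw [inv_pow, ha', inv_one]⟩ }
    refine ⟨T, ⟨?_⟩, ?_, Or.inl ⟨p, hp, fun x hx => hx.2, fun x hx y hy => hcomm x hx.1 y hy.1⟩⟩
    · rintro x ⟨hx, hx'⟩ g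
      exact ⟨hNn.conj_mem x hx g, by rw [conj_pow, hx']; simp⟩
    · intro hT
      have : (z : G) ∈ T := ⟨z.2, by
        rw [← hz, ← Subgroup.orderOf_coe, pow_orderOf_eq_one]⟩
      rw [hT, Subgroup.mem_bot] at this
      rw [← Subgroup.orderOf_coe, this, orderOf_one] at hz
      exact hp.one_lt.ne hz
  · have hp : ⁅N, N⁆ = N := by
      by_contra hne
      exact hmin ⁅N, N⁆ ⟨inferInstance, hc⟩ (lt_of_le_of_ne (Subgroup.commutator_le_self N) hne)
    obtain ⟨f, hf⟩ := h.perfect N hNn hp hNb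
    refine ⟨N, hNn, hNb, Or.inr ⟨f, hf, ?_⟩⟩
    intro r hr hd
    by_contra h60
    have : Fact r.Prime := ⟨hr⟩
    obtain ⟨y, hy⟩ := exists_prime_orderOf_dvd_card' r hd
    let c : G →* MulAut N := MulAut.conjNormal
    let T : Subgroup G :=
      { carrier := {x | ∃ v : N, (v : G) = x ∧ ∀ g : G, f (c g v) = 1}
        one_mem' := ⟨1, rfl, by simp⟩
        mul_mem' := by
          rintro _ _ ⟨a, rfl, ha⟩ ⟨b, rfl, hb⟩
          exact ⟨a * b, rfl, fun g => by rw [map_mul, map_mul, ha, hb, one_mul]⟩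
        inv_mem' := by
          rintro _ ⟨a, rfl, ha⟩
          exact ⟨a⁻¹, rfl, fun g => by rw [map_inv, map_inv, ha, inv_one]⟩ }
    have hTn : T.Normal := ⟨by
      rintro _ ⟨a, rfl, ha⟩ g
      refine ⟨c g a, by simp [c], fun k => ?_⟩
      rw [← MulAut.mul_apply, ← map_mul]
      exact ha _⟩
    have hTy : (y : G) ∈ T := by
      refine ⟨y, rfl, fun g => ?_⟩
      have ho : orderOf (f (c g y)) ∣ r := by
        rw [← hy]
        exact (orderOf_map_dvd f _).trans (orderOf_map_dvd (c g).toMonoidHom y)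
      have h2 : orderOf (f (c g y)) ∣ 60 := card_A5 ▸ orderOf_dvd_natCard _
      rcases (Nat.dvd_prime hr).1 ho with h | h
      · exact orderOf_eq_one_iff.1 h
      · exact absurd (h ▸ h2) h60
    have hTb : T ≠ ⊥ := by
      intro hT
      rw [hT, Subgroup.mem_bot] at hTy
      rw [← Subgroup.orderOf_coe, hTy, orderOf_one] at hy
      exact hr.one_lt.ne hy
    have hTN : T < N := by
      refine lt_of_le_of_ne (by rintro _ ⟨a, rfl, -⟩; exact a.2) ?_
      intro hTN
      have hsimp := simple_A5
      obtain ⟨d, hd⟩ := exists_ne (1 : A5)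
      obtain ⟨v, rfl⟩ := hf d
      have hv : (v : G) ∈ T := by rw [hTN]; exact v.2
      obtain ⟨w, hw, hw'⟩ := hv
      have := hw' 1
      rw [Subtype.ext hw] at this
      simp at this
      exact hd this
    exact hmin T ⟨hTn, hTb⟩ hTN

theorem prod_fpf {A : Type*} [CommGroup A] (σ : MulAut A) (q : ℕ) (hq : σ ^ q = 1)
    (h : ∀ v, σ v = v → v = 1) (v : A) : ∏ j ∈ Finset.range q, (σ ^ j) v = 1 := by
  apply h
  rw [map_prod]
  have h1 : ∀ j, σ ((σ ^ j) v) = (σ ^ (j + 1)) v := fun j => by rw [pow_succ']; rfl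
  simp only [h1]
  have h2 := Finset.prod_range_succ' (fun j => (σ ^ j) v) q
  rw [Finset.prod_range_succ, hq] at h2
  simpa using h2.symm

theorem rank_two {A : Type*} [CommGroup A] (σ τ : MulAut A) (hc : Commute σ τ) (q : ℕ)
    (hq : 0 < q) (hσ : σ ^ q = 1) (hτ : τ ^ q = 1)
    (h1 : ∀ j, j < q → j ≠ 0 → ∀ v, (σ ^ j) v = v → v = 1)
    (h2 : ∀ i, ∀ v, (σ ^ i * τ) v = v → v = 1) (v : A) : v ^ q = 1 := by
  have e1 : ∏ i ∈ Finset.range q, ∏ j ∈ Finset.range q, ((σ ^ i * τ) ^ j) v = 1 := by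
    apply Finset.prod_eq_one
    intro i _
    apply prod_fpf _ _ _ (h2 i)
    rw [(hc.pow_left i).mul_pow, hτ, ← pow_mul, mul_comm, pow_mul, hσ]; simp
  rw [Finset.prod_comm, Finset.prod_eq_single 0] at e1
  · simpa using e1
  · intro j hj hj0
    have : ∀ i, ((σ ^ i * τ) ^ j) v = ((σ ^ j) ^ i) ((τ ^ j) v) := by
      intro i
      rw [(hc.pow_left i).mul_pow, ← pow_mul, mul_comm i j, pow_mul]; rfl
    simp only [this]
    apply prod_fpf _ _ _ (h1 j (Finset.mem_range.1 hj) hj0)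
    rw [← pow_mul, mul_comm, pow_mul, hσ, one_pow]
  · intro h
    exact absurd (Finset.mem_range.2 hq) h

theorem orderOf_of_exp {G : Type*} [Group G] {r : ℕ} (hr : r.Prime) {v : G} (h : v ^ r = 1)
    (h1 : v ≠ 1) : orderOf v = r := orderOf_eq_prime_iff (hp := ⟨hr⟩) |>.2 ⟨h, h1⟩

theorem rank_two_act {G : Type*} [Group G] (N : Subgroup G) [N.Normal] (hb : N ≠ ⊥)
    {q r : ℕ} (hq : q.Prime) (hr : r.Prime) (hqr : q ≠ r) (he : ∀ x ∈ N, x ^ r = 1)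
    (hc : ∀ x ∈ N, ∀ y ∈ N, x * y = y * x) (hR : Rk q G) : HasEl (q * r) G := by
  by_contra hno
  obtain ⟨a, b, ha, hb', hab, hn⟩ := hR
  let _ : CommGroup N :=
    { (inferInstance : Group N) with
      mul_comm := fun x y => Subtype.ext (hc x x.2 y y.2) }
  let c : G →* MulAut N := MulAut.conjNormal
  have haq : a ^ q = 1 := by rw [← ha, pow_orderOf_eq_one]
  have hbq : b ^ q = 1 := by rw [← hb', pow_orderOf_eq_one]
  have fpf : ∀ e : G, e ^ q = 1 → e ≠ 1 → ∀ v : N, c e v = v → v = 1 := by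
    intro e heq he1 v hv
    by_contra hv1
    have hv' : (v : G) ≠ 1 := fun h => hv1 (Subtype.ext h)
    apply hno
    refine HasEl.of_commute hq hr hqr e v (orderOf_of_exp hq heq he1)
      (orderOf_of_exp hr (he v v.2) hv') ?_
    have h3 : e * v * e⁻¹ = v := congrArg Subtype.val hv
    exact mul_inv_eq_iff_eq_mul.1 h3
  have key : ∀ v : N, v ^ q = 1 := by
    apply rank_two (c a) (c b) (hab.map c) q hq.pos (by rw [← map_pow, haq, map_one])
      (by rw [← map_pow, hbq, map_one])
    · intro j hj hj0
      rw [← map_pow]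
      apply fpf
      · rw [← pow_mul, mul_comm, pow_mul, haq, one_pow]
      · intro h
        rw [← orderOf_dvd_iff_pow_eq_one, ha] at h
        exact absurd (Nat.le_of_dvd (by omega) h) (by omega)
    · intro i
      rw [← map_pow, ← map_mul]
      apply fpf
      · rw [(hab.pow_left i).mul_pow, hbq, ← pow_mul, mul_comm, pow_mul, haq]; simp
      · intro h
        apply hn
        rw [mul_eq_one_iff_inv_eq] at h
        rw [← h]
        exact inv_mem (pow_mem (Subgroup.mem_zpowers a) i)
  apply hb
  rw [Subgroup.eq_bot_iff_forall]
  intro x hx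
  have h1 : x ^ q = 1 := congrArg Subtype.val (key ⟨x, hx⟩)
  have h2 := he x hx
  have h3 := Nat.dvd_gcd (orderOf_dvd_of_pow_eq_one h1) (orderOf_dvd_of_pow_eq_one h2)
  rw [(Nat.coprime_primes hq hr).2 hqr, Nat.dvd_one, orderOf_eq_one_iff] at h3
  exact h3

theorem not_dvd_of_exp {G : Type*} [Group G] [Finite G] (N : Subgroup G) {p q : ℕ} (hp : p.Prime)
    (hq : q.Prime) (hqp : q ≠ p) (he : ∀ x ∈ N, x ^ p = 1) : ¬ q ∣ Nat.card N := by
  intro h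
  have : Fact q.Prime := ⟨hq⟩
  obtain ⟨y, hy⟩ := exists_prime_orderOf_dvd_card' q h
  have h2 : orderOf y ∣ p := orderOf_dvd_of_pow_eq_one (Subtype.ext (he y y.2))
  rw [hy] at h2
  exact hqp ((Nat.prime_dvd_prime_iff_eq hq hp).1 h2)

theorem card_quot_lt {G : Type*} [Group G] [Finite G] (N : Subgroup G) (hb : N ≠ ⊥) :
    Nat.card (G ⧸ N) < Nat.card G := by
  rw [N.card_eq_card_quotient_mul_card_subgroup]
  have h1 : 1 < Nat.card N := (Subgroup.one_lt_card_iff_ne_bot N).2 hb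
  have h2 : 0 < Nat.card (G ⧸ N) := Nat.card_pos
  nlinarith

theorem Rk.dvd {G : Type*} [Group G] {p : ℕ} (h : Rk p G) : p ∣ Nat.card G := by
  obtain ⟨a, -, ha, -⟩ := h
  exact ha ▸ orderOf_dvd_natCard a

theorem A5_not_solvable : ¬ Group.IsSolvable A5 := by
  intro h
  have := simple_A5
  have := Group.IsSolvable.commutator_lt_top_of_nontrivial A5
  rw [commutator_def, comm_A5] at this
  exact lt_irrefl _ this

theorem not_surj_of_solvable {G : Type*} [Group G] (h : Group.IsSolvable G) (N : Subgroup G)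
    (f : N →* A5) : ¬ Function.Surjective f := fun hf =>
  A5_not_solvable (Group.isSolvable_of_surjective hf)

theorem nontriv {G : Type*} [Group G] [Finite G] {q : ℕ} (hq : q.Prime) (h : q ∣ Nat.card G) :
    Nontrivial G := Finite.one_lt_card_iff_nontrivial.1
    (lt_of_lt_of_le hq.one_lt (Nat.le_of_dvd Nat.card_pos h))

theorem lemD (n : ℕ) : ∀ {G : Type u} [Group G] [Finite G], Nat.card G = n → PS G →
    ∀ {q r : ℕ}, q.Prime → r.Prime → q ≠ r → (Group.IsSolvable G ∨ ¬ r ∣ 60) → Rk q G → Rk r G →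
    HasEl (q * r) G := by
  induction n using Nat.strong_induction_on with
  | _ n ih =>
  intro G _ _ hn hG q r hq hr hqr hs hRq hRr
  have := nontriv hq hRq.dvd
  obtain ⟨N, hNn, hNb, h⟩ := minN hG
  have quo : ¬ q ∣ Nat.card N → ¬ r ∣ Nat.card N → HasEl (q * r) G := by
    intro h1 h2
    refine HasEl.lift (QuotientGroup.mk' N) (QuotientGroup.mk'_surjective N) ?_
    refine ih _ (hn ▸ card_quot_lt N hNb) rfl
      (hG.quot (QuotientGroup.mk' N) (QuotientGroup.mk'_surjective N)) hq hr hqr ?_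
      (hRq.map hq _ (not_dvd_ker_mk h1)) (hRr.map hr _ (not_dvd_ker_mk h2))
    rcases hs with hs | hs
    · exact Or.inl inferInstance
    · exact Or.inr hs
  rcases h with ⟨p, hp, he, hc⟩ | ⟨f, hf, h60⟩
  · by_cases hpr : p = r
    · subst hpr
      exact rank_two_act N hNb hq hr hqr he hc hRq
    · by_cases hpq : p = q
      · subst hpq
        exact (rank_two_act N hNb hr hq hqr.symm he hc hRr).symm
      · exact quo (not_dvd_of_exp N hp hq (Ne.symm hpq) he) (not_dvd_of_exp N hp hr (Ne.symm hpr) he)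
  · rcases hs with hs | hs
    · exact absurd hf (not_surj_of_solvable hs N f)
    · have hrN : ¬ r ∣ Nat.card N := fun h => hs (h60 r hr h)
      by_cases hq60 : q ∣ 60
      · exact b2 N f hf hr hs (of_dvd60 hq hq60) hRr.dvd hrN
      · exact quo (fun h => hq60 (h60 q hq h)) hrN

theorem rank_one_act {G : Type*} [Group G] [Finite G] (N : Subgroup G) [hN : N.Normal] (hb : N ≠ ⊥)
    {q r : ℕ} (hq : q.Prime) (hr : r.Prime) (hqr : q ≠ r) (he : ∀ x ∈ N, x ^ q = 1)
    (hc : ∀ x ∈ N, ∀ y ∈ N, x * y = y * x) (hR : ¬ Rk q G) (hd : r ∣ Nat.card (commutator G)) :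
    HasEl (q * r) G := by
  have : Fact r.Prime := ⟨hr⟩
  obtain ⟨z, hz, hz1⟩ := N.ne_bot_iff_exists_ne_one.1 hb |> fun ⟨z, hz⟩ =>
    (⟨z.1, z.2, fun h => hz (Subtype.ext h)⟩ : ∃ z : G, z ∈ N ∧ z ≠ 1)
  have hzo := orderOf_of_exp hq (he z hz) hz1
  have hNz : N = Subgroup.zpowers z := by
    apply le_antisymm
    · intro y hy
      by_contra hn
      have hy1 : y ≠ 1 := by rintro rfl; exact hn (one_mem _)
      exact hR ⟨z, y, hzo, orderOf_of_exp hq (he y hy) hy1, hc z hz y hy, hn⟩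
    · rwa [Subgroup.zpowers_le]
  obtain ⟨y, hy⟩ := exists_prime_orderOf_dvd_card' r hd
  refine HasEl.of_commute hq hr hqr z y hzo (by rw [Subgroup.orderOf_coe, hy]) ?_
  apply commutator_centralizes z y ⊤ _ y.2
  rw [← hNz, Subgroup.normalizer_eq_top]

theorem lemC (n : ℕ) : ∀ {G : Type u} [Group G] [Finite G], Nat.card G = n → PS G →
    ∀ {q r : ℕ}, q.Prime → r.Prime → q ≠ r → (Group.IsSolvable G ∨ (¬ q ∣ 60 ∧ ¬ r ∣ 60)) →
    ¬ Rk q G → ¬ Rk r G → q ∣ Nat.card (commutator G) → r ∣ Nat.card (commutator G) →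
    HasEl (q * r) G := by
  induction n using Nat.strong_induction_on with
  | _ n ih =>
  intro G _ _ hn hG q r hq hr hqr hs hRq hRr hdq hdr
  have := nontriv hq (hdq.trans (Subgroup.card_subgroup_dvd_card _))
  obtain ⟨N, hNn, hNb, h⟩ := minN hG
  have quo : ¬ q ∣ Nat.card N → ¬ r ∣ Nat.card N → HasEl (q * r) G := by
    intro h1 h2
    have hsur := QuotientGroup.mk'_surjective N
    have hcomm : ∀ s : ℕ, s.Prime → ¬ s ∣ Nat.card N → s ∣ Nat.card (commutator G) →
        s ∣ Nat.card (commutator (G ⧸ N)) := by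
      intro s hsp hsN hsd
      have : Fact s.Prime := ⟨hsp⟩
      obtain ⟨y, hy⟩ := exists_prime_orderOf_dvd_card' s hsd
      have ho := orderOf_map_of_ker hsp (QuotientGroup.mk' N) (not_dvd_ker_mk hsN) (y : G)
        (by rw [Subgroup.orderOf_coe, hy])
      have hm : QuotientGroup.mk' N (y : G) ∈ commutator (G ⧸ N) := by
        rw [commutator_def, ← Subgroup.map_top_of_surjective _ hsur, ← Subgroup.map_commutator]
        exact ⟨y, y.2, rfl⟩
      rw [← ho]
      exact Subgroup.orderOf_dvd_natCard _ hm
    refine HasEl.lift (QuotientGroup.mk' N) hsur ?_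
    refine ih _ (hn ▸ card_quot_lt N hNb) rfl
      (hG.quot (QuotientGroup.mk' N) hsur) hq hr hqr ?_
      (fun h => hRq (h.lift hq _ hsur (not_dvd_ker_mk h1)))
      (fun h => hRr (h.lift hr _ hsur (not_dvd_ker_mk h2)))
      (hcomm q hq h1 hdq) (hcomm r hr h2 hdr)
    rcases hs with hs | hs
    · exact Or.inl inferInstance
    · exact Or.inr hs
  rcases h with ⟨p, hp, he, hc⟩ | ⟨f, hf, h60⟩
  · by_cases hpr : p = r
    · subst hpr
      exact (rank_one_act N hNb hr hq hqr.symm he hc hRr hdq).symm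
    · by_cases hpq : p = q
      · subst hpq
        exact rank_one_act N hNb hq hr hqr he hc hRq hdr
      · exact quo (not_dvd_of_exp N hp hq (Ne.symm hpq) he) (not_dvd_of_exp N hp hr (Ne.symm hpr) he)
  · rcases hs with hs | hs
    · exact absurd hf (not_surj_of_solvable hs N f)
    · exact quo (fun h => hs.1 (h60 q hq h)) (fun h => hs.2 (h60 r hr h))

theorem lemAb {G : Type*} [Group G] [Finite G] {q r : ℕ} (hq : q.Prime) (hr : r.Prime)
    (hqr : q ≠ r) (h1 : q ∣ Nat.card (Abelianization G)) (h2 : r ∣ Nat.card (Abelianization G)) :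
    HasEl (q * r) G := by
  have : Fact q.Prime := ⟨hq⟩
  have : Fact r.Prime := ⟨hr⟩
  refine HasEl.lift (Abelianization.of (G := G)) (QuotientGroup.mk'_surjective _) ?_
  obtain ⟨x, hx⟩ := exists_prime_orderOf_dvd_card' q h1
  obtain ⟨y, hy⟩ := exists_prime_orderOf_dvd_card' r h2
  exact HasEl.of_commute hq hr hqr x y hx hy (Commute.all x y)

theorem dvd_comm {G : Type*} [Group G] [Finite G] {q : ℕ} (hq : q.Prime) (hd : q ∣ Nat.card G)
    (h : ¬ q ∣ Nat.card (Abelianization G)) : q ∣ Nat.card (commutator G) := by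
  rw [(commutator G).card_eq_card_quotient_mul_card_subgroup] at hd
  exact (hq.dvd_mul.1 hd).resolve_left h

theorem lemB {G : Type*} [Group G] [Finite G] (V : Subgroup G) [V.Normal] (f : V →* A5)
    (hf : Function.Surjective f) {r l : ℕ} (hr : r.Prime) (h7 : ¬ r ∣ 60)
    (hl : l = 2 ∨ l = 3 ∨ l = 5) (hd : r ∣ Nat.card G) (hR : ¬ Rk r G) : HasEl (l * r) G := by
  by_cases hdV : r ∣ Nat.card V
  · rw [card_ker_A5 f hf] at hdV
    have hk := (hr.dvd_mul.1 hdV).resolve_left h7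
    have hlr : l ≠ r := by rintro rfl; exact h7 (dvd60 hl)
    exact (b1 f hf hr hl hlr hk (fun h => hR h.sub)).sub
  · exact b2 V f hf hr h7 hl hd hdV

theorem rk_A5 : Rk 2 A5 := by
  have : Fact (Nat.Prime 2) := ⟨Nat.prime_two⟩
  have key : ∃ a b : A5, a ^ 2 = 1 ∧ a ≠ 1 ∧ b ^ 2 = 1 ∧ b ≠ 1 ∧ a * b = b * a ∧ b ≠ a := by
    refine ⟨⟨Equiv.swap 0 1 * Equiv.swap 2 3, ?_⟩,
      ⟨Equiv.swap 0 2 * Equiv.swap 1 3, ?_⟩, ?_⟩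
    · rw [Equiv.Perm.mem_alternatingGroup]; decide
    · rw [Equiv.Perm.mem_alternatingGroup]; decide
    · refine ⟨?_, ?_, ?_, ?_, ?_, ?_⟩ <;> decide
  obtain ⟨a, b, ha, ha1, hb, hb1, hab, hne⟩ := key
  have hao := orderOf_of_exp Nat.prime_two ha ha1
  refine ⟨a, b, hao, orderOf_of_exp Nat.prime_two hb hb1, hab, ?_⟩
  intro h
  rw [mem_zpowers_iff_mem_range_orderOf, hao] at h
  obtain ⟨i, hi, hib⟩ := Finset.mem_image.1 h
  have hi2 := Finset.mem_range.1 hi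
  interval_cases i
  · exact hb1 (by simpa using hib.symm)
  · exact hne (by simpa using hib.symm)

theorem lem6 {G : Type*} [Group G] [Finite G] (V : Subgroup G) (f : V →* A5)
    (hf : Function.Surjective f) (hR : ¬ Rk 2 G) : HasEl (3 * 2) G := by
  have hR' : ¬ Rk 2 V := fun h => hR h.sub
  by_cases hd : 2 ∣ Nat.card f.ker
  · exact (b1 f hf Nat.prime_two (by norm_num) (by norm_num) hd hR').sub
  · exact absurd (Rk.lift Nat.prime_two f hf hd rk_A5) hR'

open Classical in
/-- The basic colouring. -/
noncomputable def col (G : Type*) [Group G] (p : ℕ) : Fin 3 :=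
  if Rk p G then 0 else if p ∣ Nat.card (Abelianization G) then 2 else 1

theorem col_eq_zero {G : Type*} [Group G] {p : ℕ} : col G p = 0 ↔ Rk p G := by
  unfold col
  split_ifs with h1 h2 <;> simp [h1]

theorem col_main {G : Type u} [Group G] [Finite G] (hG : PS G) {q r : ℕ} (hq : q.Prime)
    (hr : r.Prime) (hqr : q ≠ r) (hdq : q ∣ Nat.card G) (hdr : r ∣ Nat.card G)
    (hs : Group.IsSolvable G ∨ (¬ q ∣ 60 ∧ ¬ r ∣ 60)) (hno : ¬ HasEl (q * r) G) :
    col G q ≠ col G r := by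
  intro h
  apply hno
  unfold col at h
  split_ifs at h with h1 h2 h3 h4 h5 h6 h7 h8
  all_goals first
    | exact absurd h (by decide)
    | skip
  · exact lemD _ rfl hG hq hr hqr (hs.imp id (fun h => h.2)) h1 h2
  · exact lemAb hq hr hqr (by assumption) (by assumption)
  · exact lemC _ rfl hG hq hr hqr hs (by assumption) (by assumption)
      (dvd_comm hq hdq (by assumption)) (dvd_comm hr hdr (by assumption))

open Classical in
/-- The colouring in the nonsolvable case. -/
noncomputable def colN (G : Type*) [Group G] (p : ℕ) : Fin 3 :=
  if p = 5 then 2 else if p = 3 then 1 else if p = 2 then (if Rk 2 G then 0 else 1) else col G p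

theorem colN_l {G : Type u} [Group G] [Finite G] (hG : PS G) (V : Subgroup G) [V.Normal]
    (f : V →* A5) (hf : Function.Surjective f) {l r : ℕ} (hl : l = 2 ∨ l = 3 ∨ l = 5)
    (hr : r.Prime) (h7 : ¬ r ∣ 60) (hd : r ∣ Nat.card G) (hno : ¬ HasEl (l * r) G) :
    colN G l ≠ colN G r := by
  have hRr : Rk r G := by
    by_contra h
    exact hno (lemB V f hf hr h7 hl hd h)
  have hr2 : r ≠ 2 := by rintro rfl; exact h7 (by norm_num)
  have hr3 : r ≠ 3 := by rintro rfl; exact h7 (by norm_num)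
  have hr5 : r ≠ 5 := by rintro rfl; exact h7 (by norm_num)
  have hcr : colN G r = 0 := by
    simp only [colN, hr2, hr3, hr5, if_false]
    exact col_eq_zero.2 hRr
  rw [hcr]
  rcases hl with rfl | rfl | rfl
  · have h2 : ¬ Rk 2 G := fun h => hno
      (lemD _ rfl hG Nat.prime_two hr hr2.symm (Or.inr h7) h hRr)
    simp [colN, h2]
  · simp [colN]
  · simp [colN]

theorem main {G : Type u} [Group G] [Finite G] (hG : PS G) :
    ∃ c : ℕ → Fin 3, ∀ p q : ℕ, p.Prime → q.Prime → p ≠ q →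
      p ∣ Nat.card G → q ∣ Nat.card G → ¬ HasEl (p * q) G → c p ≠ c q := by
  by_cases hs : Group.IsSolvable G
  · exact ⟨col G, fun p q hp hq hpq hdp hdq hno =>
      col_main hG hp hq hpq hdp hdq (Or.inl hs) hno⟩
  obtain ⟨V, hV, f, hf⟩ := exists_V hG hs
  refine ⟨colN G, fun p q hp hq hpq hdp hdq hno => ?_⟩
  have hno' : ¬ HasEl (q * p) G := fun h => hno h.symm
  by_cases hp60 : p ∣ 60
  · have hpl := of_dvd60 hp hp60
    by_cases hq60 : q ∣ 60
    · have hql := of_dvd60 hq hq60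
      have h6 : ¬ HasEl (3 * 2) G → Rk 2 G := fun h => by
        by_contra h'
        exact h (lem6 V f hf h')
      rcases hpl with rfl | rfl | rfl <;> rcases hql with rfl | rfl | rfl <;>
        first
        | exact absurd rfl hpq
        | (simp only [colN]; norm_num [h6 hno]; done)
        | (simp only [colN]; norm_num [h6 hno']; done)
        | (simp only [colN]; norm_num; done)
        | (simp only [colN]; norm_num; first | decide | (split_ifs <;> decide))
    · exact colN_l hG V f hf hpl hq hq60 hdq hno
  · by_cases hq60 : q ∣ 60
    · exact (colN_l hG V f hf (of_dvd60 hq hq60) hp hp60 hdp hno').symm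
    · have e : ∀ s : ℕ, ¬ s ∣ 60 → colN G s = col G s := by
        intro s h7
        have hr2 : s ≠ 2 := by rintro rfl; exact h7 (by norm_num)
        have hr3 : s ≠ 3 := by rintro rfl; exact h7 (by norm_num)
        have hr5 : s ≠ 5 := by rintro rfl; exact h7 (by norm_num)
        simp only [colN, hr2, hr3, hr5, if_false]
      rw [e p hp60, e q hq60]
      exact col_main hG hp hq hpq hdp hdq (Or.inr ⟨hp60, hq60⟩) hno

end PGC

/-- The complement of the prime graph of a finite pseudo-solvable group is 3-colorable. -/
theorem complement_prime_graph_three_colorable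
    (G : Type*) [Group G] [Finite G] (hG : IsPseudoSolvable G) :
    ∃ c : ℕ → Fin 3, ∀ p q : ℕ, p.Prime → q.Prime → p ≠ q →
      p ∣ Nat.card G → q ∣ Nat.card G →
      (¬ ∃ g : G, orderOf g = p * q) → c p ≠ c q := by
  exact PGC.main (PGC.PS.of_pseudo hG)
end

section
/- Let G be a finite pseudo-solvable group that is not solvable, and suppose G has no element of order 6, no element of order 10, and no element of order 15 (so {2,3,5} forms a triangle in the complement of the prime graph of G). Then for every prime p dividing |G| with p ∉ {2,3,5}, G has an element of order 3p. -/
open Equiv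
set_option maxRecDepth 100000
theorem p5_pow4 : ∀ g : Perm (Fin 5), Perm.sign g = 1 → g*g*(g*g)=1 → g*g=1 := by decide +kernel
theorem p5_mul : ∀ g : Perm (Fin 5), (g 4 = 4 ∧ Perm.sign g = 1 ∧ g*g=1) → ∀ h : Perm (Fin 5), (h 4 = 4 ∧ Perm.sign h = 1 ∧ h*h=1) → (g*h)*(g*h) = 1 := by decide +kernel
theorem p5_three :  ∀ g : Perm (Fin 5), g 4 = 4 → Perm.sign g = 1 → ¬ (g*g=1) →  g*g*g=1 := by decide +kernel
theorem cW : Fintype.card {g : alternatingGroup (Fin 5) // g.1 4 = 4 ∧ g * g = 1} = 4 := by decide +kernel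
theorem cB : Fintype.card {g : alternatingGroup (Fin 5) // g.1 4 = 4} = 12 := by decide +kernel
theorem ex3 : ∃ g : alternatingGroup (Fin 5), g.1 4 = 4 ∧ g*g ≠ 1 := by decide +kernel
theorem ex6 : ∃ g : Perm (Fin 5), orderOf g = 6 := ⟨c[0,1,2]*c[3,4], by 
  rw [orderOf_eq_iff (by norm_num)]; decide +kernel⟩

theorem ex_order {G : Type*} [Group G] [Finite G] (g : G) (n : ℕ) (h : n ∣ orderOf g) :
    ∃ k : ℕ, orderOf (g ^ k) = n :=
  ⟨_, orderOf_pow_orderOf_div (orderOf_pos g).ne' h⟩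

theorem comm_pq {G : Type*} [Group G] [Finite G] {p q : ℕ} (hpq : Nat.Coprime p q) {x y : G}
    (hc : Commute x y) (hx : p ∣ orderOf x) (hy : q ∣ orderOf y) : ∃ g : G, orderOf g = p * q := by
  obtain ⟨k, hk⟩ := ex_order x p hx
  obtain ⟨l, hl⟩ := ex_order y q hy
  refine ⟨x ^ k * y ^ l, ?_⟩
  rw [(hc.pow_pow k l).orderOf_mul_eq_mul_orderOf_of_coprime (by rwa [hk, hl]), hk, hl]

theorem pgroup_dvd {G : Type*} [Group G] {p : ℕ} [Fact p.Prime] (V : Subgroup G) (hV : IsPGroup p V)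
    {v : G} (hv : v ∈ V) (h1 : v ≠ 1) : p ∣ orderOf v := by
  obtain ⟨k, hk⟩ := IsPGroup.iff_orderOf.mp hV ⟨v, hv⟩
  rw [Subgroup.orderOf_mk] at hk
  rw [hk]
  apply dvd_pow_self
  rintro rfl
  exact h1 (orderOf_eq_one_iff.mp (by simpa using hk))

/-- Frattini reduction -/
theorem frattini_red {G Q : Type*} [Group G] [Finite G] [Group Q] (f : G →* Q)
    (hf : Function.Surjective f) (p : ℕ) [Fact p.Prime] (hp : p ∣ Nat.card f.ker) :
    ∃ (K : Subgroup G) (V : Subgroup K), Function.Surjective (f.comp K.subtype) ∧ V.Normal ∧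
      IsPGroup p V ∧ V ≠ ⊥ ∧ (∀ x ∈ V, ∀ y ∈ V, x * y = y * x) := by
  classical
  let P : Sylow p f.ker := default
  let P' : Subgroup G := P.map f.ker.subtype
  let K : Subgroup G := Subgroup.normalizer (P' : Set G)
  have hK : K ⊔ f.ker = ⊤ := Sylow.normalizer_sup_eq_top P
  have hPK : P' ≤ K := Subgroup.le_normalizer
  have hPp : IsPGroup p P' := P.2.map _
  have hne : Nontrivial P' := by
    have h1 : (P : Subgroup f.ker) ≠ ⊥ := P.ne_bot_of_dvd_card hp
    have h2 : P' ≠ ⊥ := by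
      intro h
      exact h1 ((Subgroup.map_eq_bot_iff_of_injective _ f.ker.subtype_injective).mp h)
    exact (Subgroup.nontrivial_iff_ne_bot _).mpr h2
  let N : Subgroup K := P'.subgroupOf K
  have hN : N.Normal := Subgroup.normal_in_normalizer
  let e : N ≃* P' := Subgroup.subgroupOfEquivOfLe hPK
  have hNp : IsPGroup p N := hPp.of_equiv e.symm
  have : Nontrivial N := e.toEquiv.nontrivial
  have hZ : Nontrivial (Subgroup.center N) := hNp.center_nontrivial
  refine ⟨K, (Subgroup.center N).map N.subtype, ?_, ?_, ?_, ?_, ?_⟩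
  · intro q
    obtain ⟨g, rfl⟩ := hf q
    have : g ∈ K ⊔ f.ker := hK ▸ Subgroup.mem_top g
    obtain ⟨k, hk, n, hn, rfl⟩ := Subgroup.mem_sup_of_normal_right.mp this
    exact ⟨⟨k, hk⟩, by simp [f.mem_ker.mp hn]⟩
  · infer_instance
  · exact (hNp.to_subgroup _).map _
  · intro h
    have := (Subgroup.map_eq_bot_iff_of_injective _ N.subtype_injective).mp h
    exact (Subgroup.nontrivial_iff_ne_bot _).mp hZ this
  · rintro _ ⟨x, hx, rfl⟩ _ ⟨y, hy, rfl⟩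
    have := Subgroup.mem_center_iff.mp hx y
    simpa using congrArg N.subtype this.symm

theorem invol_dvd {G : Type*} [Group G] {t : G} (h : t * t = 1) (h1 : t ≠ 1) : 2 ∣ orderOf t := by
  rw [orderOf_eq_prime (p := 2) (by rw [pow_two, h]) h1]

/-- involutions invert `V` -/
theorem invert {G : Type*} [Group G] [Finite G] (h6 : ∀ g : G, orderOf g ≠ 6)
    (V : Subgroup G) [V.Normal] (hV : IsPGroup 3 V) (hc : ∀ x ∈ V, ∀ y ∈ V, x * y = y * x)
    {t : G} (h : t * t = 1) (h1 : t ≠ 1) {v : G} (hv : v ∈ V) : t * v * t⁻¹ = v⁻¹ := by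
  have ht : t⁻¹ = t := inv_eq_of_mul_eq_one_right h
  have hw : t * v * t⁻¹ ∈ V := Subgroup.Normal.conj_mem inferInstance v hv t
  by_contra hcon
  have hw1 : (t * v * t⁻¹) * v ≠ 1 := fun h => hcon (eq_inv_of_mul_eq_one_left h)
  have hd := pgroup_dvd V hV (V.mul_mem hw hv) hw1
  have hcomm : Commute t ((t * v * t⁻¹) * v) := by
    have e1 : t * ((t * v * t⁻¹) * v) = v * t⁻¹ * v := by
      rw [show t * ((t * v * t⁻¹) * v) = (t * t) * (v * t⁻¹ * v) by group, h, one_mul]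
    have e2 : ((t * v * t⁻¹) * v) * t = v * t⁻¹ * v := by
      rw [hc _ hw _ hv]
      rw [ht]
      rw [show v * (t * v * t) * t = v * t * v * (t * t) by group, h, mul_one]
    exact e1.trans e2.symm
  obtain ⟨g, hg⟩ := comm_pq (p := 2) (q := 3) (by norm_num) hcomm (invol_dvd h h1) hd
  exact h6 g hg

theorem invol_unique {G : Type*} [Group G] [Finite G] (h6 : ∀ g : G, orderOf g ≠ 6)
    (V : Subgroup G) [V.Normal] (hV : IsPGroup 3 V) (hne : V ≠ ⊥)
    (hc : ∀ x ∈ V, ∀ y ∈ V, x * y = y * x)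
    {s t : G} (hs : s * s = 1) (hs1 : s ≠ 1) (h : t * t = 1) (h1 : t ≠ 1) (hst : s * t = t * s) :
    s = t := by
  by_contra hne'
  have hst2 : (s * t) * (s * t) = 1 := by
    rw [show (s * t) * (s * t) = s * (t * s) * t by group, ← hst,
      show s * (s * t) * t = (s * s) * (t * t) by group, hs, h, one_mul]
  have hst1 : s * t ≠ 1 := by
    intro h'
    apply hne'
    rw [eq_inv_of_mul_eq_one_left h', inv_eq_of_mul_eq_one_right h]
  obtain ⟨⟨v, hv⟩, hv1a⟩ := Subgroup.ne_bot_iff_exists_ne_one.mp hne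
  have hv1 : v ≠ 1 := fun h => hv1a (Subtype.ext h)
  have e1 := invert h6 V hV hc hst2 hst1 hv
  have e2 : (s * t) * v * (s * t)⁻¹ = v := by
    rw [show (s * t) * v * (s * t)⁻¹ = s * (t * v * t⁻¹) * s⁻¹ by group,
      invert h6 V hV hc h h1 hv, invert h6 V hV hc hs hs1 (V.inv_mem hv), inv_inv]
  rw [e1] at e2
  have h3 := pgroup_dvd V hV hv hv1
  have h2 : orderOf (v : G) ∣ 2 := by
    apply orderOf_dvd_of_pow_eq_one
    rw [pow_two]; nth_rw 1 [← e2]; simp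
  have := h3.trans h2
  norm_num at this

abbrev A5 := alternatingGroup (Fin 5)

theorem card_A5 : Nat.card A5 = 60 := by
  rw [nat_card_alternatingGroup]
  simp [Nat.factorial]

theorem A5_pow4 (g : A5) (h : g * g * (g * g) = 1) : g * g = 1 := by
  apply Subtype.ext
  exact p5_pow4 g.1 (Perm.mem_alternatingGroup.mp g.2) (congrArg Subtype.val h)

theorem A5_two_pow (k : ℕ) : ∀ (g : A5), g ^ (2 ^ k) = 1 → g * g = 1 := by
  induction k with
  | zero => intro g h; simp at h; simp [h]
  | succ k ih =>
    intro g h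
    apply A5_pow4
    apply ih
    rw [← pow_two, ← pow_mul, ← pow_succ']
    exact h

theorem sixty_dvd {G : Type*} [Group G] [Finite G] (f : G →* A5) (hf : Function.Surjective f) :
    60 ∣ Nat.card G := by
  rw [← card_A5]
  exact Subgroup.card_dvd_of_surjective f hf

theorem even_ker {G : Type*} [Group G] [Finite G] (h6 : ∀ g : G, orderOf g ≠ 6)
    (f : G →* A5) (hf : Function.Surjective f)
    (V : Subgroup G) [V.Normal] (hV : IsPGroup 3 V) (hne : V ≠ ⊥)
    (hc : ∀ x ∈ V, ∀ y ∈ V, x * y = y * x) : 2 ∣ Nat.card f.ker := by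
  by_contra hodd
  let S : Sylow 2 G := default
  have hS : ∀ s : S, s * s = 1 := by
    intro s
    obtain ⟨k, hk⟩ := S.2 s
    have hk' : (s : G) ^ 2 ^ k = 1 := by exact_mod_cast congrArg Subtype.val hk
    have h1 : f s * f s = 1 := A5_two_pow k _ (by rw [← map_pow, hk', map_one])
    have hm : (s : G) * s ∈ f.ker := by rw [MonoidHom.mem_ker, map_mul, h1]
    have d1 : orderOf ((s : G) * s) ∣ 2 ^ k := by
      apply orderOf_dvd_of_pow_eq_one
      rw [← pow_two, ← pow_mul, mul_comm, pow_mul, hk', one_pow]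
    have d2 : orderOf ((s : G) * s) ∣ Nat.card f.ker := by
      rw [← Subgroup.orderOf_mk (H := f.ker) _ hm]
      exact orderOf_dvd_natCard _
    have hcop : Nat.Coprime (2 ^ k) (Nat.card f.ker) :=
      Nat.Coprime.pow_left _ ((Nat.Prime.coprime_iff_not_dvd Nat.prime_two).mpr hodd)
    have := Nat.eq_one_of_dvd_coprimes hcop d1 d2
    apply Subtype.ext
    simpa using orderOf_eq_one_iff.mp this
  have h4 : 2 ^ 2 ∣ Nat.card S :=
    S.pow_dvd_card_of_pow_dvd_card ((by norm_num : 2 ^ 2 ∣ 60).trans (sixty_dvd f hf))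
  have hlt : 2 < Nat.card S := lt_of_lt_of_le (by norm_num) (Nat.le_of_dvd Nat.card_pos h4)
  classical
  have := Fintype.ofFinite S
  rw [Nat.card_eq_fintype_card, Fintype.two_lt_card_iff] at hlt
  obtain ⟨a, b, c, hab, hac, hbc⟩ := hlt
  have hcomm : ∀ s t : S, s * t = t * s := by
    intro s t
    have hi : ∀ s : S, s⁻¹ = s := fun s => inv_eq_of_mul_eq_one_right (hS s)
    rw [← hi (s * t), mul_inv_rev, hi, hi]
  have hn1 : a⁻¹ * b ≠ 1 := fun h => hab (inv_mul_eq_one.mp h)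
  have hn2 : a⁻¹ * c ≠ 1 := fun h => hac (inv_mul_eq_one.mp h)
  have := invol_unique h6 V hV hne hc (s := ((a⁻¹ * b : S) : G)) (t := ((a⁻¹ * c : S) : G))
    (congrArg Subtype.val (hS _)) (fun h => hn1 (Subtype.ext h))
    (congrArg Subtype.val (hS _)) (fun h => hn2 (Subtype.ext h))
    (congrArg Subtype.val (hcomm _ _))
  exact hbc (mul_left_cancel (Subtype.ext this))

theorem three_ndvd {G : Type*} [Group G] [Finite G] (h6 : ∀ g : G, orderOf g ≠ 6)
    (f : G →* A5) (hf : Function.Surjective f) : ¬ 3 ∣ Nat.card f.ker := by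
  intro h3
  obtain ⟨K, V, hg, hVn, hV, hne, hc⟩ := frattini_red f hf 3 h3
  have h6K : ∀ g : K, orderOf g ≠ 6 := fun g => by
    rw [← Subgroup.orderOf_coe]; exact h6 _
  have he := even_ker h6K _ hg V hV hne hc
  obtain ⟨L, T, hg', hTn, hT, hTne, hTc⟩ := frattini_red _ hg 2 he
  obtain ⟨⟨v, hv⟩, hv1a⟩ := Subgroup.ne_bot_iff_exists_ne_one.mp hTne
  have hv1 : v ≠ 1 := fun h => hv1a (Subtype.ext h)
  obtain ⟨k, hk⟩ := ex_order v 2 (pgroup_dvd T hT hv hv1)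
  set z := v ^ k with hz
  have hzT : z ∈ T := T.pow_mem hv k
  have hz2 : z * z = 1 := by rw [← pow_two, ← hk, pow_orderOf_eq_one]
  have hz1 : z ≠ 1 := by intro h; rw [h] at hk; simp at hk
  obtain ⟨c, hc3⟩ := exists_prime_orderOf_dvd_card' (G := L) 3
    ((by norm_num : 3 ∣ 60).trans (sixty_dvd _ hg'))
  have hcz : c * z * c⁻¹ = z := by
    have hm : c * z * c⁻¹ ∈ T := hTn.conj_mem z hzT c
    apply Subtype.ext
    apply invol_unique h6K V hV hne hc
    · rw [← Subgroup.coe_mul, show (c * z * c⁻¹) * (c * z * c⁻¹) = c * (z * z) * c⁻¹ by group, hz2]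
      simp
    · intro h
      apply hz1
      have h' : c * z * c⁻¹ = 1 := Subtype.ext h
      simpa using h'
    · exact congrArg Subtype.val hz2
    · exact fun h => hz1 (Subtype.ext h)
    · exact congrArg Subtype.val (hTc _ hm _ hzT)
  have hcomm : Commute z c := by
    have := eq_mul_of_mul_inv_eq hcz
    exact this.symm
  obtain ⟨g, hg⟩ := comm_pq (p := 2) (q := 3) (by norm_num) hcomm (by rw [hk]) (by rw [hc3])
  exact h6K g (by rw [Subgroup.orderOf_coe, hg])

theorem avg {G V : Type*} [Group G] [CommGroup V] (φ : G →* MulAut V) (S : Subgroup G) [Finite S]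
    (c : G) (hc : ∀ s ∈ S, c * s * c⁻¹ ∈ S)
    (h : ∀ s ∈ S, ∀ v, v * φ (s * c) v * φ (s * c)⁻¹ v = 1) :
    ∀ t ∈ S, ∀ v, φ t (v ^ Nat.card S) = v ^ Nat.card S := by
  intro t ht v
  have := Fintype.ofFinite S
  have hA : φ t (∏ s : S, φ (s * c) v) = ∏ s : S, φ (s * c) v := by
    rw [map_prod]
    apply Fintype.prod_equiv (Equiv.mulLeft (⟨t, ht⟩ : S))
    intro s
    rw [← MulAut.mul_apply, ← map_mul]
    simp [mul_assoc]
  have hB : φ t (∏ s : S, φ (s * c)⁻¹ v) = ∏ s : S, φ (s * c)⁻¹ v := by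
    rw [map_prod]
    apply Fintype.prod_equiv (Equiv.mulRight (⟨c * t⁻¹ * c⁻¹, hc _ (S.inv_mem ht)⟩ : S))
    intro s
    rw [← MulAut.mul_apply, ← map_mul]
    congr 2
    simp [mul_assoc]
  have hprod : v ^ Nat.card S * (∏ s : S, φ (s * c) v) * (∏ s : S, φ (s * c)⁻¹ v) = 1 := by
    have : ∏ s : S, (v * φ (s * c) v * φ (s * c)⁻¹ v) = 1 :=
      Finset.prod_eq_one fun s _ => h s s.2 v
    rw [Finset.prod_mul_distrib, Finset.prod_mul_distrib, Finset.prod_const, Finset.card_univ,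
      ← Nat.card_eq_fintype_card] at this
    exact this
  have e : v ^ Nat.card S = (∏ s : S, φ (s * c)⁻¹ v)⁻¹ * (∏ s : S, φ (s * c) v)⁻¹ := by
    rw [mul_assoc] at hprod
    rw [eq_inv_of_mul_eq_one_left hprod, mul_inv_rev]
  rw [e, map_mul, map_inv, map_inv, hA, hB]

def B5 : Subgroup A5 where
  carrier := {g | g.1 4 = 4}
  mul_mem' := by
    intro a b ha hb
    simp only [Set.mem_ofPred_eq] at *
    simp [hb, ha]
  one_mem' := by simp
  inv_mem' := by
    intro a ha
    exact Equiv.Perm.inv_eq_iff_eq.mpr (Eq.symm ha)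

def W5 : Subgroup A5 where
  carrier := {g | g.1 4 = 4 ∧ g * g = 1}
  mul_mem' := by
    rintro a b ⟨ha, ha'⟩ ⟨hb, hb'⟩
    refine ⟨?_, ?_⟩
    · simp [hb, ha]
    · apply Subtype.ext
      exact p5_mul a.1 ⟨ha, Perm.mem_alternatingGroup.mp a.2, congrArg Subtype.val ha'⟩
        b.1 ⟨hb, Perm.mem_alternatingGroup.mp b.2, congrArg Subtype.val hb'⟩
  one_mem' := by simp
  inv_mem' := by
    rintro a ⟨ha, ha'⟩
    refine ⟨?_, ?_⟩
    · exact Equiv.Perm.inv_eq_iff_eq.mpr (Eq.symm ha)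
    · rw [← mul_inv_rev, ha', inv_one]

theorem card_W5 : Nat.card W5 = 4 := by
  rw [← cW, ← Nat.card_eq_fintype_card]
  rfl

theorem card_B5 : Nat.card B5 = 12 := by
  rw [← cB, ← Nat.card_eq_fintype_card]
  rfl

theorem W5_le : W5 ≤ B5 := fun _ h => h.1

theorem W5_conj {b w : A5} (hb : b ∈ B5) (hw : w ∈ W5) : b * w * b⁻¹ ∈ W5 := by
  refine ⟨B5.mul_mem (B5.mul_mem hb hw.1) (B5.inv_mem hb), ?_⟩
  rw [show (b * w * b⁻¹) * (b * w * b⁻¹) = b * (w * w) * b⁻¹ by group, hw.2]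
  simp

theorem B5_three {b : A5} (hb : b ∈ B5) (hw : b ∉ W5) : b ^ 3 = 1 := by
  apply Subtype.ext
  have := p5_three b.1 hb (Perm.mem_alternatingGroup.mp b.2)
    (fun h => hw ⟨hb, Subtype.ext h⟩)
  simpa [pow_succ] using this

theorem exS {G : Type*} [Group G] [Finite G] (f : G →* A5) (hf : Function.Surjective f) :
    ∃ (S : Subgroup G) (k : G), IsPGroup 2 S ∧ (∀ s ∈ S, f s ∈ W5) ∧ (∃ s ∈ S, f s ≠ 1) ∧
      (∀ s, s ∈ S ↔ k * s * k⁻¹ ∈ S) ∧ f k ∈ B5 ∧ f k ∉ W5 := by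
  let L : Subgroup G := B5.comap f
  let N : Subgroup L := (W5.comap f).subgroupOf L
  have hNm : ∀ n : L, n ∈ N ↔ f n ∈ W5 := fun n => Iff.rfl
  have hN : N.Normal := by
    constructor
    intro n hn g
    rw [hNm] at *
    simpa using W5_conj g.2 hn
  let S : Sylow 2 N := default
  let S' : Subgroup L := S.map N.subtype
  have hK : Subgroup.normalizer (S' : Set L) ⊔ N = ⊤ := Sylow.normalizer_sup_eq_top S
  obtain ⟨σ, hσ4, hσ⟩ := ex3
  obtain ⟨g, hg⟩ := hf σ
  have hgL : g ∈ L := by change f g ∈ B5; rw [hg]; exact hσ4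
  have hm : (⟨g, hgL⟩ : L) ∈ Subgroup.normalizer (S' : Set L) ⊔ N := hK ▸ Subgroup.mem_top _
  obtain ⟨k, hk, n, hn, hkn⟩ := Subgroup.mem_sup_of_normal_right.mp hm
  refine ⟨S'.map L.subtype, k, (S.2.map _).map _, ?_, ?_, ?_, k.2, ?_⟩
  · rintro _ ⟨_, ⟨n, _, rfl⟩, rfl⟩
    exact n.2
  · by_contra hcon
    push Not at hcon
    let F : N →* A5 := (f.comp L.subtype).comp N.subtype
    have hle : (S : Subgroup N) ≤ F.ker := by
      intro s hs
      rw [MonoidHom.mem_ker]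
      exact hcon _ ⟨_, ⟨s, hs, rfl⟩, rfl⟩
    have hr : F.range = W5 := by
      ext w
      constructor
      · rintro ⟨n, rfl⟩; exact n.2
      · intro hw
        obtain ⟨g, rfl⟩ := hf w
        exact ⟨⟨⟨g, W5_le hw⟩, hw⟩, rfl⟩
    have h1 := Subgroup.index_dvd_of_le hle
    rw [Subgroup.index_ker, hr, card_W5] at h1
    exact S.not_dvd_index ((by norm_num : 2 ∣ 4).trans h1)
  · intro s
    have hk' := Subgroup.mem_normalizer_iff.mp hk
    constructor
    · rintro ⟨s, hs, rfl⟩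
      exact ⟨_, (hk' s).mp hs, rfl⟩
    · rintro ⟨t, ht, hts⟩
      refine ⟨k⁻¹ * t * k, (hk' _).mpr (by simpa [mul_assoc] using ht), ?_⟩
      simp at hts
      simp [hts, mul_assoc]
  · intro hW
    have : f k * f n ∈ W5 := W5.mul_mem hW hn
    rw [← map_mul, ← Subgroup.coe_mul, hkn] at this
    have h2 := this.2
    simp only at h2
    rw [hg] at h2
    exact hσ h2

theorem main2 {G : Type*} [Group G] [Finite G] (h6 : ∀ g : G, orderOf g ≠ 6)
    (f : G →* A5) (hf : Function.Surjective f) (p : ℕ) [hp : Fact p.Prime] (hp2 : p ≠ 2) (hp3 : p ≠ 3)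
    (V : Subgroup G) [V.Normal] (hV : IsPGroup p V) (hne : V ≠ ⊥)
    (hcV : ∀ x ∈ V, ∀ y ∈ V, x * y = y * x) : ∃ g : G, orderOf g = 3 * p := by
  by_contra hcon
  have hcop3 : Nat.Coprime 3 p := (Nat.coprime_primes Nat.prime_three hp.out).mpr hp3.symm
  -- key: elements of order 3 act freely
  have hfree : ∀ x : G, 3 ∣ orderOf x → ∀ v ∈ V, x * v * x⁻¹ = v → v = 1 := by
    intro x hx v hv hxv
    by_contra hv1
    exact hcon (comm_pq hcop3 (eq_mul_of_mul_inv_eq hxv) hx (pgroup_dvd V hV hv hv1))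
  have h3 := three_ndvd h6 f hf
  obtain ⟨S, k, hS, hSW, ⟨s₀, hs₀, hs₀1⟩, hkS, hkB, hkW⟩ := exS f hf
  set m := Nat.card f.ker with hm
  let c := k ^ m
  have hfk3 : f k ^ 3 = 1 := B5_three hkB hkW
  have hc3 : c ^ 3 = 1 := by
    have h1 : k ^ 3 ∈ f.ker := by rw [MonoidHom.mem_ker, map_pow, hfk3]
    have h2 : (⟨k ^ 3, h1⟩ : f.ker) ^ m = 1 := pow_card_eq_one'
    have h4 : (k ^ 3) ^ m = 1 := congrArg Subtype.val h2
    change (k ^ m) ^ 3 = 1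
    rw [← pow_mul, mul_comm, pow_mul, h4]
  have hfcB : f c ∈ B5 := by simpa [c] using B5.pow_mem hkB m
  have hfcW : f c ∉ W5 := by
    intro hW
    have hfc : f c = f k ^ m := map_pow f k m
    rw [hfc] at hW
    have : m % 3 = 1 ∨ m % 3 = 2 := by omega
    have hmod : f k ^ m = f k ^ (m % 3) := by
      conv_lhs => rw [← Nat.div_add_mod m 3, pow_add, pow_mul, hfk3, one_pow, one_mul]
    rw [hmod] at hW
    rcases this with h | h
    · rw [h, pow_one] at hW; exact hkW hW
    · rw [h] at hW
      apply hkW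
      have := W5.mul_mem hW hW
      rwa [← pow_add, pow_succ, hfk3, one_mul] at this
  have hkpow : ∀ n : ℕ, ∀ s ∈ S, k ^ n * s * (k ^ n)⁻¹ ∈ S := by
    intro n
    induction n with
    | zero => intro s hs; simpa using hs
    | succ n ih =>
      intro s hs
      have := (hkS _).mp (ih s hs)
      rw [pow_succ']
      convert this using 1
      group
  have hcS : ∀ s ∈ S, c * s * c⁻¹ ∈ S := hkpow m
  have hx3 : ∀ s ∈ S, 3 ∣ orderOf (s * c) ∧ (s * c) ^ 3 = 1 := by
    intro s hs
    have hfB : f (s * c) ∈ B5 := by rw [map_mul]; exact B5.mul_mem (W5_le (hSW s hs)) hfcB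
    have hfW : f (s * c) ∉ W5 := by
      intro h
      apply hfcW
      rw [map_mul] at h
      exact (W5.mul_mem_cancel_left (hSW s hs)).mp h
    have h3o : 3 ∣ orderOf (s * c) := by
      have : orderOf (f (s * c)) = 3 := orderOf_eq_prime (B5_three hfB hfW)
        (fun h => hfW (by rw [h]; exact W5.one_mem))
      rw [← this]
      exact orderOf_map_dvd f _
    refine ⟨h3o, ?_⟩
    have hmem : (s * c) ^ 3 ∈ S := by
      have e : (s * c) ^ 3 = s * (c * s * c⁻¹) * (c * (c * s * c⁻¹) * c⁻¹) * c ^ 3 := by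
        simp only [pow_succ, pow_zero, one_mul]; group
      rw [e, hc3, mul_one]
      exact S.mul_mem (S.mul_mem hs (hcS s hs)) (hcS _ (hcS s hs))
    by_contra h1
    have h2 := pgroup_dvd S hS hmem h1
    obtain ⟨g, hg⟩ := comm_pq (p := 2) (q := 3) (by norm_num) ((Commute.refl (s * c)).pow_left 3) h2 h3o
    exact h6 g hg
  let _ : CommGroup V := { (inferInstance : Group V) with
    mul_comm := fun a b => Subtype.ext (hcV a a.2 b b.2) }
  let φ : G →* MulAut V := MulAut.conjNormal
  have hφ : ∀ g v, ((φ g v : V) : G) = g * v * g⁻¹ := fun g v => MulAut.conjNormal_apply g v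
  have hav := avg φ S c hcS (by
    intro s hs v
    obtain ⟨ho, hx⟩ := hx3 s hs
    set x := s * c
    have hxi : x⁻¹ = x * x := by
      apply inv_eq_of_mul_eq_one_right
      rw [← mul_assoc, ← hx, pow_succ, pow_two]
    have hfix : φ x (v * φ x v * φ x⁻¹ v) = v * φ x v * φ x⁻¹ v := by
      rw [map_mul, map_mul, ← MulAut.mul_apply, ← MulAut.mul_apply, ← map_mul, ← map_mul,
        mul_inv_cancel, map_one, MulAut.one_apply, ← hxi, mul_comm, ← mul_assoc]
    apply Subtype.ext
    apply hfree x ho _ (v * φ x v * φ x⁻¹ v).2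
    rw [← hφ, hfix])
  have hSV : ∀ t ∈ S, ∀ v : V, φ t v = v := by
    intro t ht v
    obtain ⟨a, ha⟩ := IsPGroup.iff_orderOf.mp hV v
    obtain ⟨b, hb⟩ := IsPGroup.iff_card.mp hS
    have hcop : Nat.Coprime (orderOf v) (Nat.card S) := by
      rw [ha, hb]
      exact Nat.Coprime.pow _ _ ((Nat.coprime_primes hp.out Nat.prime_two).mpr hp2)
    obtain ⟨n, hn⟩ := exists_pow_eq_self_of_coprime hcop.symm
    rw [← hn, map_pow, hav t ht v]
  have hCn : (Subgroup.centralizer (V : Set G)).Normal := inferInstance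
  have hmap : ((Subgroup.centralizer (V : Set G)).map f).Normal := hCn.map f hf
  have htop : (Subgroup.centralizer (V : Set G)).map f = ⊤ := by
    rcases hmap.eq_bot_or_eq_top with h | h
    · exfalso
      apply hs₀1
      have : f s₀ ∈ (Subgroup.centralizer (V : Set G)).map f := by
        refine ⟨s₀, ?_, rfl⟩
        rw [SetLike.mem_coe, Subgroup.mem_centralizer_iff]
        intro v hv
        have := congrArg Subtype.val (hSV s₀ hs₀ ⟨v, hv⟩)
        rw [hφ] at this
        exact (eq_mul_of_mul_inv_eq this).symm
      rw [h] at this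
      exact this
    · exact h
  have h60 : 60 ∣ Nat.card (Subgroup.centralizer (V : Set G)) := by
    have := Subgroup.card_map_dvd (Subgroup.centralizer (V : Set G)) f
    rwa [htop, Subgroup.card_top, card_A5] at this
  obtain ⟨y, hy⟩ := exists_prime_orderOf_dvd_card' (G := Subgroup.centralizer (V : Set G)) 3
    ((by norm_num : 3 ∣ 60).trans h60)
  obtain ⟨⟨v, hv⟩, hv1a⟩ := Subgroup.ne_bot_iff_exists_ne_one.mp hne
  have hv1 : v ≠ 1 := fun h => hv1a (Subtype.ext h)
  apply hv1
  apply hfree y (by rw [Subgroup.orderOf_coe, hy]) v hv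
  have := Subgroup.mem_centralizer_iff.mp y.2 v hv
  rw [← this]; simp

theorem A5_not_solvable : ¬ Group.IsSolvable A5 := by
  intro h
  have hc : ∀ a b : A5, a * b = b * a := IsSimpleGroup.comm_iff_isSolvable.mpr h
  obtain ⟨σ, hσ4, hσ⟩ := ex3
  have : IsMulCommutative A5 := ⟨⟨hc⟩⟩
  have hp : (Nat.card A5).Prime := by
    let _ : CommGroup A5 := { (inferInstance : Group A5) with mul_comm := hc }
    exact IsSimpleGroup.prime_card
  rw [card_A5] at hp
  norm_num at hp

theorem W5_pgroup : IsPGroup 2 W5 := IsPGroup.of_card (n := 2) (by rw [card_W5]; norm_num)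

theorem W5_index : W5.index = 15 := by
  have := W5.card_mul_index
  rw [card_W5, card_A5] at this
  omega

theorem B5_index : B5.index = 5 := by
  have := B5.card_mul_index
  rw [card_B5, card_A5] at this
  omega

theorem card_syl_dvd : Nat.card (Sylow 2 A5) ∣ 5 := by
  let S : Sylow 2 A5 := W5_pgroup.toSylow (by rw [W5_index]; norm_num)
  rw [S.card_eq_index_normalizer]
  refine Dvd.dvd.trans ?_ (dvd_of_eq B5_index)
  apply Subgroup.index_dvd_of_le
  intro b hb
  change b ∈ Subgroup.normalizer (W5 : Set A5)
  rw [Subgroup.mem_normalizer_iff]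
  intro w
  constructor
  · exact fun hw => W5_conj hb hw
  · intro hw
    have := W5_conj (B5.inv_mem hb) hw
    have e : b⁻¹ * (b * w * b⁻¹) * b⁻¹⁻¹ = w := by group
    rw [e] at this
    exact this

theorem cjh_inj : Function.Injective (MulAction.toPermHom A5 (Sylow 2 A5)) := by
  rw [← MonoidHom.ker_eq_bot_iff]
  rcases (MonoidHom.normal_ker (MulAction.toPermHom A5 (Sylow 2 A5))).eq_bot_or_eq_top with h | h
  · exact h
  exfalso
  let S : Sylow 2 A5 := W5_pgroup.toSylow (by rw [W5_index]; norm_num)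
  have hn : W5.Normal := by
    rw [← Subgroup.normalizer_eq_top_iff, eq_top_iff]
    intro g _
    have hg : g ∈ (MulAction.toPermHom A5 (Sylow 2 A5)).ker := by rw [h]; trivial
    have h1 : g • S = S := by
      have := congrArg (fun q : Perm (Sylow 2 A5) => q S) (MonoidHom.mem_ker.mp hg)
      exact this
    exact Sylow.smul_eq_iff_mem_normalizer.mp h1
  have hi := W5_index
  have hc := card_W5
  rcases hn.eq_bot_or_eq_top with h | h
  · rw [h, Subgroup.card_bot] at hc; omega
  · rw [h, Subgroup.index_top] at hi; omega

theorem card_syl : Nat.card (Sylow 2 A5) = 5 := by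
  rcases (Nat.dvd_prime Nat.prime_five).mp card_syl_dvd with h | h
  · exfalso
    have h1 := Nat.card_le_card_of_injective _ cjh_inj
    rw [Nat.card_perm, h, card_A5] at h1
    norm_num at h1
  · exact h

theorem extend {X : Type*} [Group X] [Finite X] (h6 : ∀ g : X, orderOf g ≠ 6)
    (A : Subgroup X) [A.Normal] (f : A →* A5) (hf : Function.Surjective f)
    (hs : Group.IsSolvable f.ker) : ∃ g : X →* A5, ∀ a : A, g a = f a := by
  have hker : ∀ (α : MulAut A) (a : A), f a = 1 → f (α a) = 1 := by
    intro α a ha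
    let H : Subgroup A5 := (f.ker.map α.toMonoidHom).map f
    have hH : H.Normal := ((MonoidHom.normal_ker f).map _ α.surjective).map f hf
    have hHs : Group.IsSolvable H := by
      have h1 : Group.IsSolvable (f.ker.map α.toMonoidHom) :=
        Group.isSolvable_of_surjective (f := α.toMonoidHom.subgroupMap f.ker)
          (MonoidHom.subgroupMap_surjective _ _)
      exact Group.isSolvable_of_surjective (f := f.subgroupMap (f.ker.map α.toMonoidHom))
          (MonoidHom.subgroupMap_surjective _ _)
    have hm : f (α a) ∈ H := ⟨α a, ⟨a, ha, rfl⟩, rfl⟩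
    rcases hH.eq_bot_or_eq_top with h | h
    · rw [h] at hm; exact hm
    · exfalso
      rw [h] at hHs
      exact A5_not_solvable (Group.isSolvable_of_surjective (f := (Subgroup.topEquiv (G := A5)).toMonoidHom)
        (Subgroup.topEquiv (G := A5)).surjective)
  have hex : ∀ x : X, ∃ θ : MulAut A5, ∀ a : A, θ (f a) = f (MulAut.conjNormal x a) := by
    intro x
    let F : A →* A5 := f.comp (MulAut.conjNormal x : MulAut A).toMonoidHom
    have hF : f.ker ≤ F.ker := fun a ha => hker _ a ha
    let l : A5 →* A5 := f.liftOfSurjective hf ⟨F, hF⟩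
    have hl : ∀ a, l (f a) = f (MulAut.conjNormal x a) := fun a =>
      f.liftOfRightInverse_comp_apply _ (Function.rightInverse_surjInv hf) ⟨F, hF⟩ a
    have hinj : Function.Injective l := by
      rw [injective_iff_map_eq_one]
      intro b hb
      obtain ⟨a, rfl⟩ := hf b
      rw [hl] at hb
      have := hker (MulAut.conjNormal x)⁻¹ _ hb
      simpa using this
    exact ⟨MulEquiv.ofBijective l ⟨hinj, Finite.surjective_of_injective hinj⟩, hl⟩
  choose θ hθ using hex
  let Θ : X →* MulAut A5 := MonoidHom.mk' θ (by
    intro x y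
    ext1 b
    obtain ⟨a, rfl⟩ := hf b
    rw [hθ, MulAut.mul_apply, hθ, hθ, map_mul, MulAut.mul_apply])
  let ψ : X →* Perm (Sylow 2 A5) := (MulAction.toPermHom (MulAut A5) (Sylow 2 A5)).comp Θ
  let j := MulAction.toPermHom A5 (Sylow 2 A5)
  have hψ : ∀ a : A, ψ a = j (f a) := by
    intro a
    have h1 : θ a = MulAut.conj (f a) := by
      ext1 b
      obtain ⟨a', rfl⟩ := hf b
      rw [hθ, MulAut.conjNormal_val]
      simp
    ext1 P
    change θ a • P = f a • P
    rw [h1]; rfl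
  have hle : j.range ≤ ψ.range := by
    rintro _ ⟨b, rfl⟩
    obtain ⟨a, rfl⟩ := hf b
    exact ⟨a, hψ a⟩
  have hcj : Nat.card j.range = 60 := by
    rw [← card_A5]
    exact (Nat.card_congr (MonoidHom.ofInjective cjh_inj).toEquiv).symm
  have hcp : Nat.card (Perm (Sylow 2 A5)) = 120 := by
    rw [Nat.card_perm, card_syl]; rfl
  have hrange : ψ.range = j.range := by
    have d1 : 60 ∣ Nat.card ψ.range := hcj ▸ Subgroup.card_dvd_of_le hle
    have d2 : Nat.card ψ.range ∣ 120 := hcp ▸ Subgroup.card_subgroup_dvd_card _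
    obtain ⟨q, hq⟩ := d1
    have hq2 : q = 1 ∨ q = 2 := by
      rw [hq] at d2
      have : q ∣ 2 := Nat.dvd_of_mul_dvd_mul_left (by norm_num : 0 < 60) d2
      exact (Nat.dvd_prime Nat.prime_two).mp this
    rcases hq2 with rfl | rfl
    · exact (Subgroup.eq_of_le_of_card_ge hle (by omega)).symm
    · exfalso
      have htop : ψ.range = ⊤ := Subgroup.eq_top_of_card_eq _ (by rw [hq, hcp])
      have e : Sylow 2 A5 ≃ Fin 5 := Finite.equivFinOfCardEq card_syl
      obtain ⟨π, hπ⟩ := ex6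
      let E : Perm (Fin 5) ≃* Perm (Sylow 2 A5) := e.symm.permCongrHom
      have hm : E π ∈ ψ.range := by rw [htop]; trivial
      obtain ⟨x, hx⟩ := hm
      have : 6 ∣ orderOf x := by
        rw [← hπ, ← E.orderOf_eq π, ← hx]
        exact orderOf_map_dvd _ _
      obtain ⟨k, hk⟩ := ex_order x 6 this
      exact h6 _ hk
  refine ⟨((MonoidHom.ofInjective cjh_inj).symm.toMonoidHom).comp
    (ψ.codRestrict j.range (fun x => hrange ▸ ⟨x, rfl⟩)), ?_⟩
  intro a
  simp only [MonoidHom.comp_apply]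
  change (MonoidHom.ofInjective cjh_inj).symm _ = _
  rw [MulEquiv.symm_apply_eq]
  apply Subtype.ext
  exact hψ a

def PP (X : Type*) [Group X] : Prop :=
  Group.IsSolvable X ∨ ∃ f : X →* A5, Function.Surjective f ∧ Group.IsSolvable f.ker

theorem step {X : Type*} [Group X] [Finite X] (h6 : ∀ g : X, orderOf g ≠ 6)
    (A : Subgroup X) [A.Normal] (hA : PP A)
    (hq : IsCyclic (X ⧸ A) ∨ Nonempty ((X ⧸ A) ≃* A5)) : PP X := by
  rcases hA with hA | ⟨f, hf, hs⟩
  · rcases hq with hq | ⟨⟨e⟩⟩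
    · left
      have : Group.IsSolvable (X ⧸ A) := by
        let _ := hq.commGroup
        infer_instance
      exact Group.isSolvable_of_ker_le_range A.subtype (QuotientGroup.mk' A) (by simp)
    · right
      have hk : (e.toMonoidHom.comp (QuotientGroup.mk' A)).ker = A := by
        ext x
        rw [MonoidHom.mem_ker]
        simp
      refine ⟨e.toMonoidHom.comp (QuotientGroup.mk' A), ?_, ?_⟩
      · exact e.surjective.comp (QuotientGroup.mk'_surjective A)
      · rw [hk]; exact hA
  · obtain ⟨g, hg⟩ := extend h6 A f hf hs
    right
    rcases hq with hq | ⟨⟨e⟩⟩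
    · refine ⟨g, fun b => ?_, ?_⟩
      · obtain ⟨a, rfl⟩ := hf b
        exact ⟨a, hg a⟩
      · have : Group.IsSolvable (X ⧸ A) := by
          let _ := hq.commGroup
          infer_instance
        let i : f.ker →* g.ker := (A.subtype.comp f.ker.subtype).codRestrict g.ker (by
          intro a
          rw [MonoidHom.mem_ker]
          exact (hg a.1).trans a.2)
        refine Group.isSolvable_of_ker_le_range i ((QuotientGroup.mk' A).comp g.ker.subtype) ?_
        intro x hx
        have hxA : (x : X) ∈ A := by
          rw [MonoidHom.mem_ker] at hx
          exact (QuotientGroup.eq_one_iff _).mp hx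
        refine ⟨⟨⟨x, hxA⟩, ?_⟩, rfl⟩
        rw [MonoidHom.mem_ker, ← hg]
        exact x.2
    · exfalso
      obtain ⟨b, hb⟩ := exists_prime_orderOf_dvd_card' (G := A5) 2 (by rw [card_A5]; norm_num)
      obtain ⟨d, hd⟩ := exists_prime_orderOf_dvd_card' (G := A5) 3 (by rw [card_A5]; norm_num)
      let π : X →* A5 := e.toMonoidHom.comp (QuotientGroup.mk' A)
      have hπs : Function.Surjective π := e.surjective.comp (QuotientGroup.mk'_surjective A)
      have hπA : ∀ a : A, π a = 1 := by intro a; simp [π]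
      obtain ⟨x₀, hx₀⟩ := hπs b
      obtain ⟨a₀, ha₀⟩ := hf (g x₀)
      obtain ⟨a, ha⟩ := hf d
      let y : X := a * (x₀ * (a₀ : X)⁻¹)
      have h1 : g y = d := by simp [y, hg, ha₀, ha]
      have h2 : π y = b := by simp [y, hπA, hx₀]
      have d1 : 3 ∣ orderOf y := by rw [← hd, ← h1]; exact orderOf_map_dvd _ _
      have d2 : 2 ∣ orderOf y := by rw [← hb, ← h2]; exact orderOf_map_dvd _ _
      obtain ⟨k, hk⟩ := ex_order y 6 (by omega)
      exact h6 _ hk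

theorem PP_congr {X Y : Type*} [Group X] [Group Y] (e : X ≃* Y) (h : PP X) : PP Y := by
  rcases h with h | ⟨f, hf, hs⟩
  · left
    exact Group.isSolvable_of_surjective (f := e.toMonoidHom) e.surjective
  · right
    refine ⟨f.comp e.symm.toMonoidHom, hf.comp e.symm.surjective, ?_⟩
    let i : (f.comp e.symm.toMonoidHom).ker →* f.ker :=
      (e.symm.toMonoidHom.comp (Subgroup.subtype _)).codRestrict f.ker (fun a => a.2)
    apply Group.isSolvable_of_isSolvable_injective (f := i)
    intro a b hab
    exact Subtype.ext (e.symm.injective (congrArg Subtype.val hab))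

theorem PP_of {G : Type*} [Group G] [Finite G] (hG : IsPseudoSolvable G)
    (h6 : ∀ g : G, orderOf g ≠ 6) : PP G := by
  obtain ⟨n, H, h0, hl, hst⟩ := hG
  have key : ∀ i : Fin (n + 1), PP (H i) := by
    intro i
    induction i using Fin.induction with
    | zero =>
      left
      rw [h0]
      infer_instance
    | succ i ih =>
      obtain ⟨hle, hN, hq⟩ := hst i
      exact step (fun g => by rw [← Subgroup.orderOf_coe]; exact h6 _) _
        (PP_congr (Subgroup.subgroupOfEquivOfLe hle).symm ih) hq
  have := key (Fin.last n)
  rw [hl] at this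
  exact PP_congr Subgroup.topEquiv this

/-- If `G` is a non-solvable pseudo-solvable group whose prime-graph complement has
the triangle `{2,3,5}`, then `3 - p` is not an edge of the complement for any other
prime `p` dividing `|G|`; i.e. `G` has an element of order `3p`. -/
theorem three_adjacent_to_all_other_primes
    (G : Type*) [Group G] [Finite G] (hG : IsPseudoSolvable G) (hns : ¬ IsSolvable G)
    (h6 : ¬ ∃ g : G, orderOf g = 6)
    (h10 : ¬ ∃ g : G, orderOf g = 10)
    (h15 : ¬ ∃ g : G, orderOf g = 15) :
    ∀ p : ℕ, p.Prime → p ∣ Nat.card G → p ∉ ({2, 3, 5} : Set ℕ) →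
      ∃ g : G, orderOf g = 3 * p := by
  intro p hp hpG hpn
  have h6' : ∀ g : G, orderOf g ≠ 6 := fun g hg => h6 ⟨g, hg⟩
  rcases PP_of hG h6' with h | ⟨f, hf, -⟩
  · exact absurd h hns
  have : Fact p.Prime := ⟨hp⟩
  simp only [Set.mem_insert_iff, Set.mem_singleton_iff, not_or] at hpn
  obtain ⟨hp2, hp3, hp5⟩ := hpn
  have hpk : p ∣ Nat.card f.ker := by
    have hi : f.ker.index = 60 := by
      rw [Subgroup.index_ker, MonoidHom.range_eq_top.mpr hf, Subgroup.card_top, card_A5]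
    rw [← f.ker.card_mul_index, hi] at hpG
    rcases hp.dvd_mul.mp hpG with h | h
    · exact h
    · exfalso
      rw [show 60 = 2 * 2 * 3 * 5 by norm_num, hp.dvd_mul, hp.dvd_mul, hp.dvd_mul,
        Nat.prime_dvd_prime_iff_eq hp Nat.prime_two, Nat.prime_dvd_prime_iff_eq hp Nat.prime_three,
        Nat.prime_dvd_prime_iff_eq hp Nat.prime_five] at h
      tauto
  obtain ⟨K, V, hg, hVn, hV, hne, hc⟩ := frattini_red f hf p hpk
  obtain ⟨g, hg⟩ := main2 (fun g => by rw [← Subgroup.orderOf_coe]; exact h6' _) _ hg p hp2 hp3 V hV hne hc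
  exact ⟨g, by rw [Subgroup.orderOf_coe, hg]⟩
end

section
/- Let G be a finite group and p a prime not dividing |G|. Let V be a finite-dimensional complex vector space and π : G → GL(V) a representation of G over ℂ. Then there exist n ≥ 1 and a finite-dimensional representation σ : G → GL(W) of G over the finite field K with pⁿ elements such that for every g ∈ G, the K-dimension of the fixed space {w ∈ W : σ(g)w = w} equals the ℂ-dimension of the fixed space {v ∈ V : π(g)v = v}. In particular, for every g ∈ G, π(g) has a nonzero fixed vector if and only if σ(g) has a nonzero fixed vector. -/
open Matrix

lemma aux_cols {k : Type*} [Field k] {m n : Type*} [Fintype m] [Fintype n] (A : Matrix m n k) :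
    ∃ c : Fin A.rank → n, LinearIndependent k (A.submatrix id c).col := by
  obtain ⟨κ, a, ha, hs, hl⟩ := exists_linearIndependent' k A.col
  have : Finite κ := Finite.of_injective a ha
  have := Fintype.ofFinite κ
  have hc : Fintype.card κ = A.rank := by
    rw [Matrix.rank_eq_finrank_span_cols, ← hs, finrank_span_eq_card hl]
  let e : Fin A.rank ≃ κ := (finCongr hc.symm).trans (Fintype.equivFin κ).symm
  exact ⟨a ∘ e, hl.comp e e.injective⟩

lemma aux_minor {k : Type*} [Field k] {m n : Type*} [Fintype m] [Fintype n] (A : Matrix m n k) :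
    ∃ (s : ℕ) (r : Fin s → m) (c : Fin s → n), s = A.rank ∧ (A.submatrix r c).det ≠ 0 := by
  obtain ⟨c, hc⟩ := aux_cols A
  have h1 : (A.submatrix id c)ᵀ.rank = A.rank := by
    have := LinearIndependent.rank_matrix (M := (A.submatrix id c)ᵀ) hc
    simpa using this
  obtain ⟨r, hr⟩ := aux_cols (A.submatrix id c)ᵀ
  refine ⟨_, r ∘ finCongr h1.symm, c, rfl, ?_⟩
  have h2 : LinearIndependent k ((A.submatrix (r ∘ finCongr h1.symm) c)).row :=
    hr.comp _ (finCongr h1.symm).injective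
  rw [Matrix.linearIndependent_rows_iff_isUnit, Matrix.isUnit_iff_isUnit_det] at h2
  exact h2.ne_zero

lemma aux_rank_le {R K k : Type*} [CommRing R] [Field K] [Field k] (f : R →+* K) (h : R →+* k)
    (hf : Function.Injective f) {m n : Type*} [Fintype m] [Fintype n] (A : Matrix m n R) :
    (A.map h).rank ≤ (A.map f).rank := by
  obtain ⟨s, r, c, hs, hd⟩ := aux_minor (A.map h)
  have h1 : ((A.map f).submatrix r c).det ≠ 0 := by
    have e1 : ((A.map f).submatrix r c).det = f (A.submatrix r c).det := by
      rw [RingHom.map_det]; rfl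
    have e2 : ((A.map h).submatrix r c).det = h (A.submatrix r c).det := by
      rw [RingHom.map_det]; rfl
    rw [e1]
    rw [e2] at hd
    intro h0
    rw [(map_eq_zero_iff f hf).1 h0] at hd
    simp at hd
  rw [← hs]
  calc s = ((A.map f).submatrix r c).rank := by rw [Matrix.rank_of_det_ne_zero h1]; simp
    _ ≤ _ := Matrix.rank_submatrix_le _ _ _

lemma aux_ker {k : Type*} [Field k] {m : ℕ} (A : Matrix (Fin m) (Fin m) k) :
    A.rank + Module.finrank k (LinearMap.ker A.mulVecLin) = m := by
  have := LinearMap.finrank_range_add_finrank_ker A.mulVecLin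
  simpa [Matrix.rank] using this

lemma aux_sum {k : Type*} [Field k] {m : ℕ} (A : Matrix (Fin m) (Fin m) k) (d : ℕ)
    (hd : (d : k) ≠ 0) (hA : A ^ d = 1) :
    (A - 1).rank + (∑ i ∈ Finset.range d, A ^ i).rank = m := by
  have h0 := aux_ker (A - 1)
  have : LinearMap.range (∑ i ∈ Finset.range d, A ^ i).mulVecLin = LinearMap.ker (A-1).mulVecLin := by
    ext v
    constructor
    · rintro ⟨w, rfl⟩
      simp only [LinearMap.mem_ker, Matrix.mulVecLin_apply, Matrix.mulVec_mulVec]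
      rw [mul_geom_sum, hA]; simp
    · intro hv
      have hv1 : A *ᵥ v = v := by
        simpa [Matrix.sub_mulVec, sub_eq_zero] using hv
      have hv2 : ∀ i : ℕ, (A ^ i) *ᵥ v = v := by
        intro i
        induction i with
        | zero => simp
        | succ i ih => rw [pow_succ, ← Matrix.mulVec_mulVec, hv1, ih]
      refine ⟨(d : k)⁻¹ • v, ?_⟩
      rw [map_smul, Matrix.mulVecLin_apply, Matrix.sum_mulVec]
      simp only [hv2]
      simp [← Nat.cast_smul_eq_nsmul k, smul_smul, hd]
  rw [← this] at h0
  exact h0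

lemma aux_map_sub {R L : Type*} [CommRing R] [Field L] {m : ℕ} (A : Matrix (Fin m) (Fin m) R)
    (j : R →+* L) : (A - 1).map j = A.map j - 1 := by
  have := map_sub j.mapMatrix A 1
  rwa [map_one] at this

lemma aux_sum_map {R L : Type*} [CommRing R] [Field L] {m : ℕ} (A : Matrix (Fin m) (Fin m) R)
    (d : ℕ) (j : R →+* L) (hj : (d : L) ≠ 0) (hA : A ^ d = 1) :
    ((A - 1).map j).rank + ((∑ i ∈ Finset.range d, A ^ i).map j).rank = m := by
  have := aux_sum (j.mapMatrix A) d hj (by rw [← map_pow, hA, map_one])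
  simp_rw [← map_pow] at this
  rw [← map_sum] at this
  rw [aux_map_sub]
  exact this

lemma aux_fix {R K k : Type*} [CommRing R] [Field K] [Field k] (f : R →+* K) (h : R →+* k)
    (hf : Function.Injective f) {m : ℕ} (A : Matrix (Fin m) (Fin m) R) (d : ℕ)
    (hK : (d : K) ≠ 0) (hk : (d : k) ≠ 0) (hA : A ^ d = 1) :
    Module.finrank k (LinearMap.ker (A.map h - 1).mulVecLin) =
    Module.finrank K (LinearMap.ker (A.map f - 1).mulVecLin) := by
  have a1 := aux_sum_map A d f hK hA
  have a2 := aux_sum_map A d h hk hA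
  have a3 := aux_rank_le f h hf (A - 1)
  have a4 := aux_rank_le f h hf (∑ i ∈ Finset.range d, A ^ i)
  rw [← aux_map_sub, ← aux_map_sub]
  have b1 := aux_ker ((A - 1).map h)
  have b2 := aux_ker ((A - 1).map f)
  omega

lemma aux_val (p : ℕ) (hp : p.Prime) :
    ∃ B : ValuationSubring ℂ, (p : ℂ) ∈ B.nonunits := by
  let A : Subring ℂ := (Int.castRingHom ℂ).range
  have hI : Ideal.span {(p : A)} ≠ ⊤ := by
    rw [Ne, Ideal.span_singleton_eq_top]
    intro h
    obtain ⟨⟨_, z, rfl⟩, hz⟩ := h.exists_right_inv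
    have h1 := congrArg (Subtype.val) hz
    have h2 : ((p * z : ℤ) : ℂ) = (1 : ℤ) := by simpa using h1
    have h3 : (p : ℤ) * z = 1 := by exact_mod_cast h2
    have h4 : (p : ℤ) ∣ 1 := ⟨z, h3.symm⟩
    exact hp.one_lt.ne' (by exact_mod_cast Int.eq_one_of_dvd_one (by positivity) h4)
  obtain ⟨B, -, hB⟩ := Ideal.image_subset_nonunits_valuationSubring _ hI
  exact ⟨B, hB ⟨(p : A), Ideal.subset_span rfl, by simp⟩⟩

lemma aux_lattice {G V : Type*} [Group G] [Finite G] [AddCommGroup V] [Module ℂ V]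
    [FiniteDimensional ℂ V] (π : Representation ℂ G V) (B : ValuationSubring ℂ) :
    ∃ (m : ℕ) (b : Module.Basis (Fin m) ℂ V),
      ∀ g i j, LinearMap.toMatrix b b (π g) i j ∈ B := by
  let b0 := Module.finBasis ℂ V
  let v : G × Fin (Module.finrank ℂ V) → V := fun x => π x.1 (b0 x.2)
  let L : Submodule B V := Submodule.span B (Set.range v)
  have hfin : Module.Finite B L := Module.Finite.span_of_finite B (Set.finite_range v)
  have : Module.IsTorsionFree B V := Module.IsTorsionFree.trans_faithfulSMul B ℂ V
  have hflat : Module.Flat B L := by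
    rw [Module.Flat.flat_iff_torsion_eq_bot_of_isBezout,
      ← Submodule.isTorsionFree_iff_torsion_eq_bot]
    infer_instance
  have hfree : Module.Free B L := Module.free_of_flat_of_isLocalRing
  let c := Module.finBasis B L
  have hL : ∀ g, ∀ x ∈ L, π g x ∈ L := by
    intro g x hx
    have : L ≤ L.comap ((π g).restrictScalars B) := by
      refine Submodule.span_le.2 ?_
      rintro _ ⟨⟨g', i⟩, rfl⟩
      refine Submodule.subset_span ⟨(g * g', i), ?_⟩
      simp [v]
    exact this hx
  have hli : LinearIndependent ℂ (fun i => (c i : V)) := by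
    rw [← LinearIndependent.iff_fractionRing B ℂ]
    exact c.linearIndependent.map' L.subtype (Submodule.ker_subtype L)
  have hspan : ∀ (x : V) (hx : x ∈ L), x = ∑ i, ((c.repr ⟨x, hx⟩ i : B) : ℂ) • (c i : V) := by
    intro x hx
    have := congrArg (Subtype.val) (c.sum_repr ⟨x, hx⟩)
    refine this.symm.trans ?_
    rw [Submodule.coe_sum]
    rfl
  have hsp : ⊤ ≤ Submodule.span ℂ (Set.range (fun i => (c i : V))) := by
    rw [← b0.span_eq]
    refine Submodule.span_le.2 ?_
    rintro _ ⟨i, rfl⟩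
    have hi : b0 i ∈ L := Submodule.subset_span ⟨(1, i), by simp [v]⟩
    rw [hspan _ hi]
    exact Submodule.sum_mem _ fun j _ => Submodule.smul_mem _ _ (Submodule.subset_span ⟨j, rfl⟩)
  let b := Module.Basis.mk hli hsp
  refine ⟨_, b, fun g i j => ?_⟩
  have hj : π g (b j) ∈ L := by
    rw [Module.Basis.mk_apply]
    exact hL g _ (c j).2
  rw [LinearMap.toMatrix_apply, hspan _ hj]
  have : ∀ k, (c k : V) = b k := fun k => (Module.Basis.mk_apply hli hsp k).symm
  simp only [this, Module.Basis.repr_sum_self]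
  exact SetLike.coe_mem _

lemma aux_ne {k W : Type*} [Field k] [AddCommGroup W] [Module k W] [FiniteDimensional k W]
    (T : W →ₗ[k] W) :
    (∃ v : W, v ≠ 0 ∧ T v = v) ↔ Module.finrank k (LinearMap.ker (T - 1)) ≠ 0 := by
  rw [Ne, Submodule.finrank_eq_zero, ← Ne, Submodule.ne_bot_iff]
  constructor
  · rintro ⟨v, h0, h1⟩
    exact ⟨v, by simp [h1], h0⟩
  · rintro ⟨v, h1, h0⟩
    exact ⟨v, h0, by simpa [sub_eq_zero] using h1⟩

lemma aux_finite_field (p : ℕ) [hp : Fact p.Prime] (K R : Type*) [Field K] [CommRing R] [Algebra ℤ R]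
    [Algebra.FiniteType ℤ R] (φ : R →+* K) (hφ : Function.Surjective φ) (hK : (p : K) = 0) : ∃ n : ℕ, 1 ≤ n ∧ Nonempty (K ≃+* GaloisField p n) := by
  have h0 : Algebra.FiniteType ℤ K :=
    Algebra.FiniteType.of_surjective
      (AlgHom.mk φ (fun z => by simp) : R →ₐ[ℤ] K) hφ
  have : CharP K p := by
    exact (CharP.charP_iff_prime_eq_zero hp.out).2 hK
  let _ : Algebra (ZMod p) K := ZMod.algebra K p
  have h1 : Algebra.FiniteType (ZMod p) K := Algebra.FiniteType.of_restrictScalars_finiteType ℤ (ZMod p) K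
  have h2 : Module.Finite (ZMod p) K := finite_of_finite_type_of_isJacobsonRing (ZMod p) K
  have h3 : Finite K := Module.finite_of_finite (ZMod p)
  refine ⟨Module.finrank (ZMod p) K, Module.finrank_pos, ⟨(GaloisField.algEquivGaloisField p _ ?_).toRingEquiv⟩⟩
  rw [Module.natCard_eq_pow_finrank (K := ZMod p), Nat.card_zmod]

/-- Reduction of a complex representation modulo a prime `p` not dividing `|G|`,
preserving the dimensions of fixed-point spaces of all group elements:
there exist `n ≥ 1` and a representation of `G` on a finite-dimensional vector space
over the field `GaloisField p n` with `pⁿ` elements such that every `g ∈ G` has a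
fixed space of the same dimension as in the original complex representation.
In particular, `g` has a nonzero fixed vector in one representation iff it does
in the other. -/
theorem modular_reduction_preserves_fixed_points
    (G : Type*) [Group G] [Finite G] (p : ℕ) [hp : Fact p.Prime]
    (hpG : ¬ p ∣ Nat.card G)
    (V : Type*) [AddCommGroup V] [Module ℂ V] [FiniteDimensional ℂ V]
    (π : Representation ℂ G V) :
    ∃ (n : ℕ), 1 ≤ n ∧
      ∃ (m : ℕ) (σ : Representation (GaloisField p n) G (Fin m → GaloisField p n)),
        (∀ g : G,
          Module.finrank (GaloisField p n) (LinearMap.ker (σ g - 1)) =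
            Module.finrank ℂ (LinearMap.ker (π g - 1))) ∧
        (∀ g : G,
          (∃ v : V, v ≠ 0 ∧ π g v = v) ↔
            (∃ w : Fin m → GaloisField p n, w ≠ 0 ∧ σ g w = w)) := by
  obtain ⟨B, hB⟩ := aux_val p hp.out
  obtain ⟨m, b, hb⟩ := aux_lattice π B
  let P : G → Matrix (Fin m) (Fin m) ℂ := fun g => LinearMap.toMatrix b b (π g)
  let S : Set ℂ := Set.range (fun x : G × Fin m × Fin m => P x.1 x.2.1 x.2.2)
  have hS : S.Finite := Set.finite_range _
  let R : Subalgebra ℤ ℂ := Algebra.adjoin ℤ S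
  have hRft : Algebra.FiniteType ℤ R := Algebra.FiniteType.adjoin_of_finite hS
  have hRB : ∀ x ∈ R, x ∈ B := by
    intro x hx
    have : R ≤ subalgebraOfSubring B.toSubring := by
      refine Algebra.adjoin_le ?_
      rintro _ ⟨⟨g, i, j⟩, rfl⟩
      exact hb g i j
    exact this hx
  have hpR : ¬ IsUnit (p : R) := by
    intro h
    obtain ⟨y, hy⟩ := h.exists_right_inv
    have h1 : (p : ℂ) * y = 1 := by simpa using congrArg Subtype.val hy
    rw [ValuationSubring.mem_nonunits_iff_exists_mem_maximalIdeal] at hB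
    obtain ⟨h2, h3⟩ := hB
    refine (IsLocalRing.mem_maximalIdeal _).1 h3 ?_
    exact IsUnit.of_mul_eq_one (⟨y, hRB y y.2⟩ : B) (Subtype.ext h1)
  obtain ⟨M, hM, hpM⟩ := exists_max_ideal_of_mem_nonunits hpR
  let _ : Field (R ⧸ M) := Ideal.Quotient.field M
  obtain ⟨n, hn, ⟨e⟩⟩ := aux_finite_field p (R ⧸ M) R (Ideal.Quotient.mk M) Ideal.Quotient.mk_surjective (by
    rw [← map_natCast (Ideal.Quotient.mk M)]
    exact Ideal.Quotient.eq_zero_iff_mem.2 hpM)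
  let h : R →+* GaloisField p n := e.toRingHom.comp (Ideal.Quotient.mk M)
  let f : R →+* ℂ := R.val.toRingHom
  have hf : Function.Injective f := Subtype.val_injective
  let Q : G → Matrix (Fin m) (Fin m) R := fun g => Matrix.of fun i j =>
    ⟨P g i j, Algebra.subset_adjoin ⟨(g, i, j), rfl⟩⟩
  have hQP : ∀ g, f.mapMatrix (Q g) = P g := fun g => rfl
  have hfm : Function.Injective (f.mapMatrix (m := Fin m)) := by
    intro X Y hXY
    ext i j
    exact congrFun (congrFun hXY i) j
  have hQ1 : Q 1 = 1 := by
    apply hfm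
    rw [hQP, map_one]
    simp only [P, map_one]
    exact LinearMap.toMatrix_one b
  have hQm : ∀ x y, Q (x * y) = Q x * Q y := by
    intro x y
    apply hfm
    rw [map_mul, hQP, hQP, hQP]
    simp only [P, map_mul]
    exact LinearMap.toMatrix_mul b _ _
  let Qh : G →* Matrix (Fin m) (Fin m) R := ⟨⟨Q, hQ1⟩, hQm⟩
  let σ : Representation (GaloisField p n) G (Fin m → GaloisField p n) :=
    ((Matrix.toLinAlgEquiv' : Matrix (Fin m) (Fin m) (GaloisField p n) ≃ₐ[GaloisField p n] _).toAlgHom.toRingHom.toMonoidHom).comp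
      ((h.mapMatrix (m := Fin m)).toMonoidHom.comp Qh)
  have hdim : ∀ g : G,
          Module.finrank (GaloisField p n) (LinearMap.ker (σ g - 1)) =
            Module.finrank ℂ (LinearMap.ker (π g - 1)) := by
    intro g
    have hc : (Nat.card G) ≠ 0 := Nat.card_pos.ne'
    have := aux_fix f h hf (Q g) (Nat.card G) (by exact_mod_cast hc)
      (by rwa [Ne, CharP.cast_eq_zero_iff (GaloisField p n) p])
      (by change Qh g ^ _ = 1; rw [← map_pow, pow_card_eq_one', map_one])
    have e1 : σ g - 1 = ((Q g).map h - 1).mulVecLin := by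
      refine LinearMap.ext fun w => ?_
      rw [Matrix.mulVecLin_apply, Matrix.sub_mulVec, Matrix.one_mulVec]
      rfl
    have e2 : Module.finrank ℂ (LinearMap.ker ((Q g).map f - 1).mulVecLin) =
        Module.finrank ℂ (LinearMap.ker (π g - 1)) := by
      have h1 := aux_ker ((Q g).map f - 1)
      have h2 := LinearMap.finrank_range_add_finrank_ker (π g - 1)
      have h3 : LinearMap.toMatrix b b (π g - 1) = (Q g).map f - 1 := by
        rw [map_sub, LinearMap.toMatrix_one]; rfl
      have h4 := Matrix.rank_eq_finrank_range_toLin ((Q g).map f - 1) b b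
      rw [← h3, Matrix.toLin_toMatrix, h3] at h4
      rw [Module.finrank_eq_card_basis b, Fintype.card_fin] at h2
      omega
    rw [e1, this, e2]
  refine ⟨n, hn, m, σ, hdim, fun g => ?_⟩
  rw [aux_ne, aux_ne, hdim]
end

section
/- Let G be a finite pseudo-solvable group and let p be a prime with p ∉ {2,3,5} such that p, 3, and 5 all divide |G| and G has no element of order 3p, no element of order 5p, and no element of order 15 (so {p,3,5} forms a triangle in the complement of the prime graph of G). Then G has an element of order 6 and an element of order 10 (so neither 2–3 nor 2–5 is an edge of the complement of the prime graph). -/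
universe u v

lemma ps_order_of_map {G H : Type*} [Group G] [Finite G] [Group H] (f : G →* H) (x : G) :
    ∃ y : G, orderOf y = orderOf (f x) :=
  ⟨_, orderOf_pow_orderOf_div (orderOf_pos x).ne' (orderOf_map_dvd f x)⟩

lemma ps_no_order_surj {G H : Type*} [Group G] [Finite G] [Group H] (f : G →* H)
    (hf : Function.Surjective f) {n : ℕ} (hn : ¬ ∃ g : G, orderOf g = n) :
    ¬ ∃ g : H, orderOf g = n := by
  rintro ⟨h, hh⟩
  obtain ⟨g, rfl⟩ := hf h
  obtain ⟨y, hy⟩ := ps_order_of_map f g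
  exact hn ⟨y, hy.trans hh⟩

lemma ps_no_order_inj {G H : Type*} [Group G] [Group H] (f : H →* G)
    (hf : Function.Injective f) {n : ℕ} (hn : ¬ ∃ g : G, orderOf g = n) :
    ¬ ∃ g : H, orderOf g = n := by
  rintro ⟨h, hh⟩
  exact hn ⟨f h, by rw [orderOf_injective f hf, hh]⟩

lemma ps_order_mul {G : Type*} [Group G] [Finite G] {s t : ℕ} (hs : s.Prime) (ht : t.Prime)
    (hst : s ≠ t) {x y : G} (hc : x * y = y * x) (hx : s ∣ orderOf x) (hy : t ∣ orderOf y) :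
    ∃ g : G, orderOf g = s * t := by
  have h1 := orderOf_pow_orderOf_div (orderOf_pos x).ne' hx
  have h2 := orderOf_pow_orderOf_div (orderOf_pos y).ne' hy
  have hc' : Commute x y := hc
  refine ⟨x ^ (orderOf x / s) * y ^ (orderOf y / t), ?_⟩
  rw [(hc'.pow_pow _ _).orderOf_mul_eq_mul_orderOf_of_coprime, h1, h2]
  rw [h1, h2]
  exact (Nat.coprime_primes hs ht).2 hst

lemma ps_frob {K M : Type*} [Group K] [Finite K] [CommGroup M] [Finite M]
    [MulDistribMulAction K M] [FaithfulSMul K M]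
    (hcop : (Nat.card M).Coprime (Nat.card K)) (x : K) {q : ℕ} (hq : q.Prime)
    (hx : orderOf x = q) (hfree : ∀ m : M, x • m = m → m = 1)
    (Q : Subgroup K) (hQ : Q ≠ ⊥) (hn : ∀ y ∈ Q, x * y * x⁻¹ ∈ Q)
    (hf : ∀ y ∈ Q, x * y = y * x → y = 1) : False := by
  classical
  have := Fintype.ofFinite Q
  obtain ⟨r, rfl⟩ : ∃ r, q = r + 1 := ⟨q - 1, by have := hq.pos; omega⟩
  have hxq : x ^ (r + 1) = 1 := by rw [← hx]; exact pow_orderOf_eq_one x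
  have hprod : ∀ m : M, ∏ i ∈ Finset.range (r + 1), x ^ i • m = 1 := by
    intro m
    apply hfree
    rw [Finset.smul_prod']
    simp only [smul_smul, ← pow_succ']
    rw [Finset.prod_range_succ, hxq, Finset.prod_range_succ' (fun i => x ^ i • m)]
    simp
  have hni : ∀ i : ℕ, ∀ y ∈ Q, x ^ i * y * (x ^ i)⁻¹ ∈ Q := by
    intro i
    induction i with
    | zero => intro y hy; simpa using hy
    | succ i ih =>
      intro y hy
      have := hn _ (ih y hy)
      rw [pow_succ']
      simpa [mul_assoc] using this
  have hfi : ∀ i : ℕ, 0 < i → i < r + 1 → ∀ y ∈ Q, x ^ i * y = y * x ^ i → y = 1 := by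
    intro i h0 h1 y hy hc
    apply hf y hy
    have hcop : i.Coprime (orderOf x) := by
      rw [hx]
      exact (hq.coprime_iff_not_dvd.2 (Nat.not_dvd_of_pos_of_lt h0 h1)).symm
    obtain ⟨j, hj⟩ := exists_pow_eq_self_of_coprime hcop
    have hc' : Commute (x ^ i) y := hc
    have := hc'.pow_left j
    rw [hj] at this
    exact this
  have hbij : ∀ i : ℕ, 0 < i → i < r + 1 → ∀ m : M,
      ∏ y : Q, ((y : K) * x ^ i * (y : K)⁻¹) • m = ∏ z : Q, (z : K) • x ^ i • m := by
    intro i h0 h1 m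
    let φ : Q → Q := fun y => ⟨y * (x ^ i * (y : K)⁻¹ * (x ^ i)⁻¹),
      Q.mul_mem y.2 (hni i _ (Q.inv_mem y.2))⟩
    have hφ : Function.Injective φ := by
      intro y z hyz
      have h2 : (y : K) * (x ^ i * (y : K)⁻¹ * (x ^ i)⁻¹) = z * (x ^ i * (z : K)⁻¹ * (x ^ i)⁻¹) :=
        congrArg Subtype.val hyz
      have h3 := hfi i h0 h1 ((z : K)⁻¹ * y) (Q.mul_mem (Q.inv_mem z.2) y.2) (by
        have h4 : (y : K) * x ^ i * (y : K)⁻¹ = z * x ^ i * (z : K)⁻¹ := by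
          have := congrArg (· * x ^ i) h2
          simpa [mul_assoc] using this
        have h5 : (y : K) * x ^ i = z * x ^ i * (z : K)⁻¹ * y := by
          rw [← h4]; group
        rw [mul_assoc, h5]; group)
      exact (Subtype.ext (inv_mul_eq_one.1 h3)).symm
    have hφb : Function.Bijective φ := Finite.injective_iff_bijective.1 hφ
    refine Fintype.prod_bijective φ hφb _ _ ?_
    intro y
    rw [smul_smul]
    congr 1
    simp [φ, mul_assoc]
  have key : ∀ m : M, m ^ Nat.card Q = ∏ z : Q, (z : K) • m := by
    intro m
    have h1 : ∏ i ∈ Finset.range (r + 1), ∏ y : Q, ((y : K) * x ^ i * (y : K)⁻¹) • m = 1 := by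
      rw [Finset.prod_comm]
      apply Finset.prod_eq_one
      intro y _
      simp only [← smul_smul]
      rw [← Finset.smul_prod', hprod, smul_one]
    have h2 : ∏ i ∈ Finset.range (r + 1), ∏ z : Q, (z : K) • x ^ i • m = 1 := by
      rw [Finset.prod_comm]
      apply Finset.prod_eq_one
      intro y _
      rw [← Finset.smul_prod', hprod, smul_one]
    rw [Finset.prod_range_succ'] at h1 h2
    rw [Finset.prod_congr rfl (fun i hi => hbij (i + 1) (Nat.succ_pos i)
      (by simpa using hi) m)] at h1
    have h3 := mul_left_cancel (h1.trans h2.symm)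
    simpa [Nat.card_eq_fintype_card] using h3
  have hcopQ : (Nat.card M).Coprime (Nat.card Q) :=
    Nat.Coprime.coprime_dvd_right (Subgroup.card_subgroup_dvd_card Q) hcop
  apply hQ
  rw [Subgroup.eq_bot_iff_forall]
  intro w hw
  apply FaithfulSMul.eq_of_smul_eq_smul (α := M)
  intro m
  rw [one_smul]
  apply hcopQ.pow_left_bijective.1
  change (w • m) ^ Nat.card Q = m ^ Nat.card Q
  rw [← smul_pow', key, Finset.smul_prod']
  refine Fintype.prod_bijective (fun z : Q => (⟨w, hw⟩ : Q) * z) (Group.mulLeft_bijective _) _ _ ?_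
  intro z
  rw [smul_smul]; rfl

/-- Frattini step. -/
lemma ps_B {K M : Type*} [Group K] [Finite K] [CommGroup M] [Finite M]
    [MulDistribMulAction K M] [FaithfulSMul K M]
    (hcop : (Nat.card M).Coprime (Nat.card K)) {s t : ℕ} (hs : s.Prime) (ht : t.Prime)
    (hst : s ≠ t) (N : Subgroup K) [N.Normal] (hsN : ¬ s ∣ Nat.card N) (hsK : s ∣ Nat.card K)
    (htN : t ∣ Nat.card N) (hno : ¬ ∃ g : K, orderOf g = s * t)
    (hfree : ∀ k : K, orderOf k = s → ∀ m : M, k • m = m → m = 1) : False := by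
  have : Fact t.Prime := ⟨ht⟩
  have : Fact s.Prime := ⟨hs⟩
  obtain ⟨P⟩ : Nonempty (Sylow t N) := inferInstance
  have hF := Sylow.normalizer_sup_eq_top P
  set Q : Subgroup K := Subgroup.map N.subtype (P : Subgroup N) with hQdef
  have hQne : Q ≠ ⊥ := by
    intro h
    rw [hQdef, Subgroup.map_eq_bot_iff_of_injective _ N.subtype_injective] at h
    exact P.ne_bot_of_dvd_card htN h
  have hsQ : s ∣ Nat.card (Subgroup.normalizer (Q : Set K)) := by
    have h1 : Nat.card K ∣ Nat.card (Subgroup.normalizer (Q : Set K)) * Nat.card N := by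
      have h2 : Nat.card (K ⧸ N) ∣ Nat.card (Subgroup.normalizer (Q : Set K)) := by
        apply Subgroup.card_dvd_of_surjective
          ((QuotientGroup.mk' N).comp (Subgroup.normalizer (Q : Set K)).subtype)
        intro y
        obtain ⟨k, rfl⟩ := QuotientGroup.mk'_surjective N y
        have hk : k ∈ Subgroup.normalizer (Q : Set K) ⊔ N := by rw [hF]; trivial
        obtain ⟨a, ha, b, hb, rfl⟩ := Subgroup.mem_sup_of_normal_right.1 hk
        refine ⟨⟨a, ha⟩, ?_⟩
        have hb1 : (QuotientGroup.mk' N) b = 1 := (QuotientGroup.eq_one_iff b).2 hb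
        simp only [MonoidHom.comp_apply, Subgroup.subtype_apply, map_mul, hb1, mul_one]
      rw [Subgroup.card_eq_card_quotient_mul_card_subgroup N]
      exact mul_dvd_mul_right h2 _
    exact (hs.dvd_mul.1 (hsK.trans h1)).resolve_right hsN
  obtain ⟨x, hx⟩ := exists_prime_orderOf_dvd_card' s hsQ
  have hx' : orderOf (x : K) = s := by rw [Subgroup.orderOf_coe, hx]
  have hPp : IsPGroup t Q := P.2.map _
  refine ps_frob hcop (x : K) hs hx' (hfree _ hx') Q hQne ?_ ?_
  · intro y hy
    exact (Subgroup.mem_normalizer_iff.1 x.2 y).1 hy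
  · intro y hy hc
    by_contra hy1
    apply hno
    refine ps_order_mul hs ht hst hc hx'.symm.dvd ?_
    obtain ⟨k, hk⟩ := IsPGroup.iff_orderOf.1 hPp ⟨y, hy⟩
    rw [Subgroup.orderOf_mk] at hk
    rw [hk]
    apply dvd_pow_self
    rintro rfl
    exact hy1 (orderOf_eq_one_iff.1 (by simpa using hk))

def PSn : ℕ → ∀ (G : Type u) [Group G], Prop
  | 0, G, _ => Subsingleton G
  | n + 1, G, _ => ∃ (N : Subgroup G) (_ : N.Normal), PSn n N ∧
      (IsCyclic (G ⧸ N) ∨ Nonempty ((G ⧸ N) ≃* alternatingGroup (Fin 5)))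

instance : IsSimpleGroup (alternatingGroup (Fin 5)) := alternatingGroup.isSimpleGroup (by simp)

lemma PSn_surj (n : ℕ) : ∀ (G H : Type u) [Group G] [Group H] (f : G →* H),
    Function.Surjective f → PSn n G → PSn n H := by
  induction n with
  | zero => intro G H _ _ f hf h; exact @Function.Surjective.subsingleton _ _ f h hf
  | succ n ih =>
    rintro G H _ _ f hf ⟨N, hN, h1, h2⟩
    have hN' := hN.map f hf
    refine ⟨N.map f, hN', ih _ _ (f.subgroupMap N) (f.subgroupMap_surjective N) h1, ?_⟩
    have hs : Function.Surjective (QuotientGroup.map N (N.map f) f (Subgroup.le_comap_map f N)) := by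
      intro y
      obtain ⟨k, rfl⟩ := QuotientGroup.mk'_surjective _ y
      obtain ⟨g, rfl⟩ := hf k
      exact ⟨(g : G ⧸ N), rfl⟩
    rcases h2 with h2 | ⟨⟨e⟩⟩
    · left
      exact isCyclic_of_surjective _ hs
    · set F := (QuotientGroup.map N (N.map f) f (Subgroup.le_comap_map f N)).comp
        e.symm.toMonoidHom with hF
      have hFs : Function.Surjective F := hs.comp e.symm.surjective
      rcases (inferInstance : F.ker.Normal).eq_bot_or_eq_top with h | h
      · right
        exact ⟨(MulEquiv.ofBijective F ⟨(MonoidHom.ker_eq_bot_iff F).1 h, hFs⟩).symm⟩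
      · left
        have : Subsingleton (H ⧸ N.map f) := by
          refine subsingleton_of_forall_eq 1 ?_
          intro y
          obtain ⟨a, rfl⟩ := hFs y
          have : a ∈ F.ker := by rw [h]; trivial
          exact this
        exact isCyclic_of_subsingleton

lemma PSn_of (G : Type u) [Group G] (hG : IsPseudoSolvable G) : ∃ n, PSn n G := by
  obtain ⟨n, H, h0, h1, h⟩ := hG
  refine ⟨n, ?_⟩
  have key : ∀ i : ℕ, ∀ hi : i < n + 1, PSn i (H ⟨i, hi⟩) := by
    intro i
    induction i with
    | zero =>
      intro hi
      have : H ⟨0, hi⟩ = ⊥ := h0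
      change Subsingleton _
      rw [this]
      infer_instance
    | succ i ih =>
      intro hi
      obtain ⟨hle, hN, hc⟩ := h ⟨i, by omega⟩
      exact ⟨_, hN, PSn_surj i _ _ (Subgroup.subgroupOfEquivOfLe hle).symm.toMonoidHom
        (Subgroup.subgroupOfEquivOfLe hle).symm.surjective (ih (by omega)), hc⟩
  have h2 := key n (by omega)
  have h3 : H ⟨n, by omega⟩ = ⊤ := h1
  rw [h3] at h2
  exact PSn_surj n _ _ (Subgroup.topEquiv : (⊤ : Subgroup G) ≃* G).toMonoidHom
    (Subgroup.topEquiv : (⊤ : Subgroup G) ≃* G).surjective h2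

lemma ps_a5_six : ∀ g : alternatingGroup (Fin 5), g ^ 6 = 1 → g ^ 2 = 1 ∨ g ^ 3 = 1 := by
  decide +kernel

lemma ps_a5_three : (Finset.univ.filter
    (fun g : alternatingGroup (Fin 5) => g ^ 3 = 1 ∧ g ≠ 1)).card = 20 := by
  decide +kernel

lemma ps_a5_klein : ∀ g h : alternatingGroup (Fin 5), g ^ 2 = 1 → g.1 4 = 4 → h ^ 2 = 1 →
    h.1 4 = 4 → (g * h) ^ 2 = 1 := by
  decide +kernel

lemma ps_a5_ex3 : ∃ g : alternatingGroup (Fin 5), g ^ 3 = 1 ∧ g ≠ 1 ∧ g.1 4 = 4 := by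
  decide +kernel

lemma ps_a5_ex2 : ∃ g : alternatingGroup (Fin 5), g ^ 2 = 1 ∧ g ≠ 1 ∧ g.1 4 = 4 := by
  decide +kernel

lemma ps_a5_ex5 : ∃ g : alternatingGroup (Fin 5), g ^ 5 = 1 ∧ g ≠ 1 := by
  decide +kernel

def psV : Subgroup (alternatingGroup (Fin 5)) where
  carrier := {g | g ^ 2 = 1 ∧ g.1 4 = 4}
  mul_mem' := by
    rintro a b ⟨ha, ha'⟩ ⟨hb, hb'⟩
    refine ⟨ps_a5_klein a b ha ha' hb hb', ?_⟩
    simp [hb', ha']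
  one_mem' := by simp
  inv_mem' := by
    rintro a ⟨ha, ha'⟩
    refine ⟨by simp [ha], ?_⟩
    simp only [InvMemClass.coe_inv]
    rw [Equiv.Perm.inv_eq_iff_eq, ha']

def psA : Subgroup (alternatingGroup (Fin 5)) where
  carrier := {g | g.1 4 = 4}
  mul_mem' := by
    intro a b ha hb
    simp only [Set.mem_ofPred_eq] at *
    simp [ha, hb]
  one_mem' := by simp
  inv_mem' := by
    intro a ha
    simp only [Set.mem_ofPred_eq, InvMemClass.coe_inv] at *
    rw [Equiv.Perm.inv_eq_iff_eq, ha]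

lemma ps_dvd_of_ex {G H : Type*} [Group G] [Finite G] [Group H] {q : ℕ} (hq : q.Prime)
    (f : G →* H) (g : G) (h1 : f g ^ q = 1) (h2 : f g ≠ 1) : q ∣ Nat.card G := by
  have : Fact q.Prime := ⟨hq⟩
  have h := orderOf_eq_prime h1 h2
  exact h ▸ (orderOf_map_dvd f g).trans (orderOf_dvd_natCard g)

/-- The case where `K` maps onto `A₅` with kernel of order prime to 6. -/
lemma ps_A5case {K M : Type*} [Group K] [Finite K] [CommGroup M] [Finite M]
    [MulDistribMulAction K M] [FaithfulSMul K M]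
    (hcop : (Nat.card M).Coprime (Nat.card K)) (f : K →* alternatingGroup (Fin 5))
    (hf : Function.Surjective f) (h2 : ¬ 2 ∣ Nat.card f.ker) (h3 : ¬ 3 ∣ Nat.card f.ker)
    (hfree : ∀ k : K, orderOf k = 3 → ∀ m : M, k • m = m → m = 1) : False := by
  have ker_of : ∀ q : ℕ, q.Prime → ¬ q ∣ Nat.card f.ker → ∀ g : K, orderOf g = q → f g ≠ 1 := by
    intro q hq hd g hg h1
    apply hd
    rw [← hg, ← Subgroup.orderOf_mk g (show g ∈ f.ker from h1)]
    exact orderOf_dvd_natCard _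
  set T := psA.comap f with hT
  set T0 := psV.comap f with hT0
  have hle : T0 ≤ T := fun k hk => hk.2
  have hN : (T0.subgroupOf T).Normal := by
    constructor
    rintro ⟨n, hn⟩ hn0 ⟨g, hg⟩
    rw [Subgroup.mem_subgroupOf] at hn0 ⊢
    obtain ⟨h1, h2⟩ := hn0
    refine ⟨?_, (T.mul_mem (T.mul_mem hg hn) (T.inv_mem hg))⟩
    have h3 : f n ^ 2 = 1 := h1
    change f (g * n * g⁻¹) ^ 2 = 1
    rw [map_mul, map_mul, map_inv, conj_pow, h3]
    simp
  refine ps_B (K := T) (M := M) (s := 3) (t := 2) ?_ Nat.prime_three Nat.prime_two (by norm_num)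
    (T0.subgroupOf T) ?_ ?_ ?_ ?_ ?_
  · exact Nat.Coprime.coprime_dvd_right (Subgroup.card_subgroup_dvd_card T) hcop
  · intro hd
    have : Fact (Nat.Prime 3) := ⟨Nat.prime_three⟩
    obtain ⟨x, hx⟩ := exists_prime_orderOf_dvd_card' 3 hd
    have hx' : orderOf ((x : T) : K) = 3 := by
      rw [Subgroup.orderOf_coe, Subgroup.orderOf_coe, hx]
    apply ker_of 3 Nat.prime_three h3 _ hx'
    have h1 : f ((x : T) : K) ^ 2 = 1 := (Subgroup.mem_subgroupOf.1 x.2).1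
    have h2 : f ((x : T) : K) ^ 3 = 1 := by
      rw [← map_pow, ← hx', pow_orderOf_eq_one, map_one]
    rwa [pow_succ, h1, one_mul] at h2
  · obtain ⟨a, ha, ha1, ha4⟩ := ps_a5_ex3
    obtain ⟨k, rfl⟩ := hf a
    exact ps_dvd_of_ex Nat.prime_three (f.comp T.subtype) ⟨k, ha4⟩ ha ha1
  · obtain ⟨a, ha, ha1, ha4⟩ := ps_a5_ex2
    obtain ⟨k, rfl⟩ := hf a
    exact ps_dvd_of_ex Nat.prime_two ((f.comp T.subtype).comp (T0.subgroupOf T).subtype)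
      ⟨⟨k, ha4⟩, ⟨ha, ha4⟩⟩ ha ha1
  · apply ps_no_order_inj T.subtype T.subtype_injective
    rintro ⟨g, hg⟩
    have h6 : f g ^ 6 = 1 := by
      rw [← map_pow, show (6 : ℕ) = 3 * 2 by norm_num, ← hg, pow_orderOf_eq_one, map_one]
    rcases ps_a5_six _ h6 with h | h
    · refine ker_of 3 Nat.prime_three h3 (g ^ 2) ?_ (by rw [map_pow, h])
      rw [orderOf_pow' _ (by norm_num), hg]; norm_num
    · refine ker_of 2 Nat.prime_two h2 (g ^ 3) ?_ (by rw [map_pow, h])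
      rw [orderOf_pow' _ (by norm_num), hg]; norm_num
  · intro k hk m hm
    exact hfree k (by rw [Subgroup.orderOf_coe, hk]) m hm

lemma ps_A (n : ℕ) : ∀ (K : Type u) (M : Type v) [Group K] [Finite K] [CommGroup M] [Finite M]
    [MulDistribMulAction K M] [FaithfulSMul K M] (_ : PSn n K)
    (_ : (Nat.card M).Coprime (Nat.card K)) (s t : ℕ) (_ : s.Prime) (_ : t.Prime)
    (_ : s ≠ t) (_ : s ∣ Nat.card K) (_ : t ∣ Nat.card K)
    (_ : ¬ ∃ g : K, orderOf g = s * t)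
    (_ : ∀ k : K, orderOf k = s → ∀ m : M, k • m = m → m = 1)
    (_ : ∀ k : K, orderOf k = t → ∀ m : M, k • m = m → m = 1)
    (_ : (s = 3 ∧ t = 5) ∨ ¬ 3 ∣ Nat.card K ∨ ¬ 5 ∣ Nat.card K)
    (_ : (¬ ∃ g : K, orderOf g = 6) ∨ (¬ ∃ g : K, orderOf g = 10)), False := by
  induction n with
  | zero =>
    intro K M _ _ _ _ _ _ hK _ s t hs _ _ hsK
    have : Subsingleton K := hK
    rw [Nat.card_unique] at hsK
    exact fun _ _ _ _ _ _ => hs.one_lt.ne' (Nat.dvd_one.1 hsK)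
  | succ n ih =>
    rintro K M _ _ _ _ _ _ ⟨N, hN, hPN, hquot⟩ hcop s t hs ht hst hsK htK hno hfs hft hA h610
    have hno' : ¬ ∃ g : K, orderOf g = t * s := by rwa [mul_comm]
    have hdN := Subgroup.card_subgroup_dvd_card N
    have B1 : t ∣ Nat.card N → s ∣ Nat.card N := fun h => by
      by_contra h'
      exact ps_B hcop hs ht hst N h' hsK h hno hfs
    have B2 : s ∣ Nat.card N → t ∣ Nat.card N := fun h => by
      by_contra h'
      exact ps_B hcop ht hs hst.symm N h' htK h hno' hft
    by_cases hsN : s ∣ Nat.card N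
    · refine ih N M hPN (hcop.coprime_dvd_right hdN) s t hs ht hst hsN (B2 hsN)
        (ps_no_order_inj N.subtype N.subtype_injective hno) ?_ ?_ ?_ ?_
      · exact fun k hk m hm => hfs k (by rw [Subgroup.orderOf_coe, hk]) m hm
      · exact fun k hk m hm => hft k (by rw [Subgroup.orderOf_coe, hk]) m hm
      · rcases hA with h | h | h
        · exact Or.inl h
        · exact Or.inr (Or.inl fun h' => h (h'.trans hdN))
        · exact Or.inr (Or.inr fun h' => h (h'.trans hdN))
      · exact h610.imp (ps_no_order_inj N.subtype N.subtype_injective)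
          (ps_no_order_inj N.subtype N.subtype_injective)
    have htN : ¬ t ∣ Nat.card N := fun h => hsN (B1 h)
    have hcard := Subgroup.card_eq_card_quotient_mul_card_subgroup N
    rcases hquot with hcyc | ⟨⟨e⟩⟩
    · have hsq : s ∣ Nat.card (K ⧸ N) := by
        rw [hcard] at hsK
        exact (hs.dvd_mul.1 hsK).resolve_right hsN
      have htq : t ∣ Nat.card (K ⧸ N) := by
        rw [hcard] at htK
        exact (ht.dvd_mul.1 htK).resolve_right htN
      obtain ⟨g, hg⟩ := IsCyclic.exists_ofOrder_eq_natCard (α := K ⧸ N)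
      refine ps_no_order_surj (QuotientGroup.mk' N) (QuotientGroup.mk'_surjective N) hno ?_
      exact ps_order_mul hs ht hst (x := g) (y := g) rfl (hg ▸ hsq) (hg ▸ htq)
    · set f : K →* alternatingGroup (Fin 5) := e.toMonoidHom.comp (QuotientGroup.mk' N) with hf
      have hfs' : Function.Surjective f := e.surjective.comp (QuotientGroup.mk'_surjective N)
      have hker : f.ker = N := by
        ext k
        simp [hf]
      have h3K : 3 ∣ Nat.card K := by
        obtain ⟨a, ha, ha1, ha4⟩ := ps_a5_ex3
        obtain ⟨k, rfl⟩ := hfs' a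
        exact ps_dvd_of_ex Nat.prime_three f k ha ha1
      have h5K : 5 ∣ Nat.card K := by
        obtain ⟨a, ha, ha1⟩ := ps_a5_ex5
        obtain ⟨k, rfl⟩ := hfs' a
        exact ps_dvd_of_ex Nat.prime_five f k ha ha1
      obtain ⟨rfl, rfl⟩ : s = 3 ∧ t = 5 := by tauto
      by_cases h2 : 2 ∣ Nat.card N
      · rcases h610 with h | h
        · exact ps_B hcop hs Nat.prime_two (by norm_num) N hsN hsK h2 h hfs
        · exact ps_B hcop ht Nat.prime_two (by norm_num) N htN htK h2 h hft
      · exact ps_A5case hcop f hfs' (by rwa [hker]) (by rwa [hker]) hfs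

lemma ps_char_core {G : Type*} [Group G] [Finite G] {r : ℕ} [Fact r.Prime] (M : Subgroup G)
    (hN : M.Normal) (hM : M ≠ ⊥) (hp : IsPGroup r M) :
    ∃ M' : Subgroup G, M'.Characteristic ∧ M' ≠ ⊥ ∧ IsPGroup r M' := by
  refine ⟨sSup {H | H.Normal ∧ IsPGroup r H}, ?_, ?_, ?_⟩
  · rw [Subgroup.characteristic_iff_map_le]
    intro ϕ
    rw [Subgroup.map_le_iff_le_comap]
    apply sSup_le
    rintro H ⟨h1, h2⟩
    rw [← Subgroup.map_le_iff_le_comap]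
    exact le_sSup ⟨h1.map _ ϕ.surjective, h2.map _⟩
  · intro h
    apply hM
    rw [eq_bot_iff, ← h]
    exact le_sSup ⟨hN, hp⟩
  · exact Sylow.sSup_of_normal _ (fun H hH => hH.2) (fun H hH => hH.1)

lemma ps_char_A5 {G : Type*} [Group G] [Finite G] (A : Subgroup G) (hN : A.Normal)
    (e : A ≃* alternatingGroup (Fin 5)) :
    (∃ g : G, orderOf g = 15) ∨ A.Characteristic := by
  by_cases hc : A.Characteristic
  · exact Or.inr hc
  left
  rw [Subgroup.characteristic_iff_le_map] at hc
  push Not at hc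
  obtain ⟨ϕ, hϕ⟩ := hc
  set B := A.map ϕ.toMonoidHom with hB
  have hBN : B.Normal := hN.map _ ϕ.surjective
  have : IsSimpleGroup A := e.isSimpleGroup
  have hdis : Disjoint A B := by
    have hn : (B.subgroupOf A).Normal := inferInstance
    rcases hn.eq_bot_or_eq_top with h | h
    · exact (Subgroup.subgroupOf_eq_bot.1 h).symm
    · exact absurd (Subgroup.subgroupOf_eq_top.1 h) hϕ
  obtain ⟨a, ha, ha1, _⟩ := ps_a5_ex3
  obtain ⟨b, hb, hb1⟩ := ps_a5_ex5
  have : Fact (Nat.Prime 3) := ⟨Nat.prime_three⟩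
  have : Fact (Nat.Prime 5) := ⟨Nat.prime_five⟩
  have hoa : orderOf ((e.symm a : A) : G) = 3 := by
    rw [Subgroup.orderOf_coe, MulEquiv.orderOf_eq, orderOf_eq_prime ha ha1]
  have hob : orderOf (ϕ ((e.symm b : A) : G)) = 5 := by
    rw [MulEquiv.orderOf_eq, Subgroup.orderOf_coe, MulEquiv.orderOf_eq, orderOf_eq_prime hb hb1]
  have hcom := Subgroup.commute_of_normal_of_disjoint A B hN hBN hdis _ _ (e.symm a).2
    (Subgroup.mem_map_of_mem ϕ.toMonoidHom (e.symm b).2)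
  exact ps_order_mul Nat.prime_three Nat.prime_five (by norm_num) hcom hoa.symm.dvd hob.symm.dvd

lemma ps_tri (n : ℕ) : ∀ (G : Type u) [Group G] [Finite G], PSn n G →
    Subsingleton G ∨ (∃ g : G, orderOf g = 15) ∨
    (∃ A : Subgroup G, A.Characteristic ∧ Nonempty (A ≃* alternatingGroup (Fin 5))) ∨
    ∃ r : ℕ, r.Prime ∧ ∃ M : Subgroup G, M.Characteristic ∧ M ≠ ⊥ ∧ IsPGroup r M := by
  induction n with
  | zero => intro G _ _ h; exact Or.inl h
  | succ n ih =>
    rintro G _ _ ⟨N, hN, hPN, hquot⟩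
    rcases ih N hPN with h | ⟨g, hg⟩ | ⟨A, hA, ⟨e⟩⟩ | ⟨r, hr, M, hM, hM1, hMp⟩
    · have hbot : N = ⊥ := Subgroup.eq_bot_of_subsingleton N
      subst hbot
      rcases hquot with hc | ⟨⟨e⟩⟩
      · have hcG : IsCyclic G := isCyclic_of_surjective (QuotientGroup.quotientBot (G := G))
          (QuotientGroup.quotientBot (G := G)).surjective
        rcases subsingleton_or_nontrivial G with h1 | h1
        · exact Or.inl h1
        · right; right; right
          have hpr : (Nat.card G).minFac.Prime :=
            Nat.minFac_prime (Finite.one_lt_card (α := G)).ne'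
          have : Fact (Nat.card G).minFac.Prime := ⟨hpr⟩
          obtain ⟨x, hx⟩ := exists_prime_orderOf_dvd_card' (G := G) (Nat.card G).minFac
            (Nat.minFac_dvd _)
          have hcomm : ∀ a b : G, a * b = b * a := by
            letI := hcG.commGroup
            exact fun a b => mul_comm a b
          refine ⟨_, hpr, ps_char_core (Subgroup.zpowers x) ⟨?_⟩ ?_ ?_⟩
          · intro a ha g
            rwa [hcomm g a, mul_inv_cancel_right]
          · intro h
            rw [Subgroup.zpowers_eq_bot] at h
            rw [h, orderOf_one] at hx
            exact hpr.one_lt.ne hx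
          · exact IsPGroup.of_card (n := 1) (by rw [Nat.card_zpowers, hx, pow_one])
      · right; right; left
        exact ⟨⊤, inferInstance,
          ⟨(Subgroup.topEquiv.trans (QuotientGroup.quotientBot (G := G)).symm).trans e⟩⟩
    · exact Or.inr (Or.inl ⟨g, by rw [Subgroup.orderOf_coe, hg]⟩)
    · have hn : (A.map N.subtype).Normal := inferInstance
      have e' := (A.equivMapOfInjective N.subtype N.subtype_injective).symm.trans e
      rcases ps_char_A5 _ hn e' with h | h
      · exact Or.inr (Or.inl h)
      · exact Or.inr (Or.inr (Or.inl ⟨_, h, ⟨e'⟩⟩))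
    · have hn : (M.map N.subtype).Normal := inferInstance
      have : Fact r.Prime := ⟨hr⟩
      right; right; right
      refine ⟨r, hr, ps_char_core _ hn ?_ (hMp.map _)⟩
      rwa [Ne, Subgroup.map_eq_bot_iff_of_injective _ N.subtype_injective]

lemma ps_A5_normal {G : Type*} [Group G] [Finite G] (A : Subgroup G) (hN : A.Normal)
    (e : A ≃* alternatingGroup (Fin 5)) {p : ℕ} (hp : p.Prime) (hp2 : p ≠ 2) (hp3 : p ≠ 3)
    (hp5 : p ≠ 5) (hpG : p ∣ Nat.card G) (hno : ¬ ∃ g : G, orderOf g = 3 * p) : False := by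
  classical
  have : Fact p.Prime := ⟨hp⟩
  have : Fact (Nat.Prime 3) := ⟨Nat.prime_three⟩
  obtain ⟨x, hx⟩ := exists_prime_orderOf_dvd_card' p hpG
  letI : MulAction G {a : A // a ^ 3 = 1 ∧ a ≠ 1} :=
    { smul := fun g a => ⟨MulAut.conjNormal g a.1, by
        rw [← map_pow, a.2.1, map_one], by
        rw [Ne, EmbeddingLike.map_eq_one_iff]; exact a.2.2⟩
      one_smul := fun a => Subtype.ext (by
        change MulAut.conjNormal (1 : G) a.1 = a.1
        simp)
      mul_smul := fun g h a => Subtype.ext (by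
        change MulAut.conjNormal (g * h) a.1 = MulAut.conjNormal g (MulAut.conjNormal h a.1)
        simp) }
  have hcard : Nat.card {a : A // a ^ 3 = 1 ∧ a ≠ 1} = 20 := by
    rw [← ps_a5_three, ← Fintype.card_subtype, ← Nat.card_eq_fintype_card]
    refine Nat.card_congr (e.toEquiv.subtypeEquiv ?_)
    intro a
    simp [← map_pow]
  have hP : IsPGroup p (Subgroup.zpowers x) :=
    IsPGroup.of_card (n := 1) (by rw [Nat.card_zpowers, hx, pow_one])
  obtain ⟨a, ha⟩ := hP.nonempty_fixed_point_of_prime_not_dvd_card {a : A // a ^ 3 = 1 ∧ a ≠ 1} (by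
    rw [hcard, show 20 = 2 * 2 * 5 by norm_num, hp.dvd_mul, hp.dvd_mul,
      Nat.prime_dvd_prime_iff_eq hp Nat.prime_two, Nat.prime_dvd_prime_iff_eq hp Nat.prime_five]
    tauto)
  have h1 := ha ⟨x, Subgroup.mem_zpowers x⟩
  have h2 : MulAut.conjNormal x a.1 = a.1 := congrArg Subtype.val h1
  have h3 : x * (a.1 : G) * x⁻¹ = a.1 := by
    rw [← MulAut.conjNormal_apply, h2]
  apply hno
  refine ps_order_mul Nat.prime_three hp hp3.symm (x := (a.1 : G)) (y := x) ?_ ?_ hx.symm.dvd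
  · rw [eq_comm, ← mul_inv_eq_iff_eq_mul]; exact h3
  · rw [Subgroup.orderOf_coe, orderOf_eq_prime a.2.1 a.2.2]

lemma ps_D {G : Type u} {M : Type u} [Group G] [Finite G] [CommGroup M] [Finite M]
    [Nontrivial M] (ι : M →* G) (hι : Function.Injective ι) (φ : G →* MulAut M)
    (hφ : ∀ g m, ι (φ g m) = g * ι m * g⁻¹) (n : ℕ) (hG : PSn n G) {r s t : ℕ}
    (hr : r.Prime) (hs : s.Prime) (ht : t.Prime) (hrs : r ≠ s) (hrt : r ≠ t) (hst : s ≠ t)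
    (hM : IsPGroup r M) (hrK : ¬ r ∣ Nat.card φ.range)
    (hsG : s ∣ Nat.card G) (htG : t ∣ Nat.card G)
    (h1 : ¬ ∃ g : G, orderOf g = r * s) (h2 : ¬ ∃ g : G, orderOf g = r * t)
    (h3 : ¬ ∃ g : G, orderOf g = s * t) (hA : (s = 3 ∧ t = 5) ∨ r = 3 ∨ r = 5)
    (h610 : (¬ ∃ g : G, orderOf g = 6) ∨ (¬ ∃ g : G, orderOf g = 10)) : False := by
  have : Fact r.Prime := ⟨hr⟩
  have hord : ∀ m : M, m ≠ 1 → r ∣ orderOf (ι m) := by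
    intro m hm
    rw [orderOf_injective ι hι]
    obtain ⟨k, hk⟩ := IsPGroup.iff_orderOf.1 hM m
    rw [hk]
    apply dvd_pow_self
    rintro rfl
    exact hm (orderOf_eq_one_iff.1 (by simpa using hk))
  have hcomm : ∀ g m, φ g m = m → ι m * g = g * ι m := by
    intro g m h
    rw [eq_comm, ← mul_inv_eq_iff_eq_mul, ← hφ, h]
  have hfree : ∀ q : ℕ, q.Prime → r ≠ q → (¬ ∃ g : G, orderOf g = r * q) →
      ∀ k : φ.range, orderOf k = q → ∀ m : M, k • m = m → m = 1 := by
    rintro q hq hrq hno ⟨_, g, rfl⟩ hk m hm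
    by_contra hm1
    apply hno
    refine ps_order_mul hr hq hrq (hcomm g m hm) (hord m hm1) ?_
    have hk' : orderOf (φ.rangeRestrict g) = q := hk
    rw [← hk']
    exact orderOf_map_dvd φ.rangeRestrict g
  have hdvd : ∀ q : ℕ, q.Prime → r ≠ q → (¬ ∃ g : G, orderOf g = r * q) →
      q ∣ Nat.card G → q ∣ Nat.card φ.range := by
    intro q hq hrq hno hqG
    rw [← Subgroup.card_mul_index φ.ker, Subgroup.index_ker] at hqG
    refine (hq.dvd_mul.1 hqG).resolve_left ?_
    intro hd
    have : Fact q.Prime := ⟨hq⟩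
    obtain ⟨x, hx⟩ := exists_prime_orderOf_dvd_card' q hd
    obtain ⟨m, hm⟩ := exists_ne (1 : M)
    apply hno
    refine ps_order_mul hr hq hrq (hcomm (x : G) m ?_) (hord m hm) ?_
    · have : φ x = 1 := x.2
      rw [this]; rfl
    · rw [Subgroup.orderOf_coe, hx]
  have hsurj := φ.rangeRestrict_surjective
  refine ps_A n φ.range M (PSn_surj n _ _ φ.rangeRestrict hsurj hG) ?_ s t hs ht hst
    (hdvd s hs hrs h1 hsG) (hdvd t ht hrt h2 htG) (ps_no_order_surj _ hsurj h3)
    (hfree s hs hrs h1) (hfree t ht hrt h2) ?_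
    (h610.imp (ps_no_order_surj _ hsurj) (ps_no_order_surj _ hsurj))
  · obtain ⟨k, hk⟩ := IsPGroup.iff_card.1 hM
    rw [hk]
    exact Nat.Coprime.pow_left _ ((hr.coprime_iff_not_dvd).2 hrK)
  · rcases hA with h | rfl | rfl
    · exact Or.inl h
    · exact Or.inr (Or.inl hrK)
    · exact Or.inr (Or.inr hrK)

lemma ps_E {G : Type u} [Group G] [Finite G] (M0 : Subgroup G) (hN : M0.Normal) (h0 : M0 ≠ ⊥)
    (n : ℕ) (hG : PSn n G) {r s t : ℕ}
    (hr : r.Prime) (hs : s.Prime) (ht : t.Prime) (hrs : r ≠ s) (hrt : r ≠ t) (hst : s ≠ t)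
    (hM : IsPGroup r M0) (hrK : ¬ r ∣ Nat.card (G ⧸ M0))
    (hsG : s ∣ Nat.card G) (htG : t ∣ Nat.card G)
    (h1 : ¬ ∃ g : G, orderOf g = r * s) (h2 : ¬ ∃ g : G, orderOf g = r * t)
    (h3 : ¬ ∃ g : G, orderOf g = s * t) (hA : (s = 3 ∧ t = 5) ∨ r = 3 ∨ r = 5)
    (h610 : (¬ ∃ g : G, orderOf g = 6) ∨ (¬ ∃ g : G, orderOf g = 10)) : False := by
  have : Fact r.Prime := ⟨hr⟩
  have : Nontrivial M0 := (Subgroup.nontrivial_iff_ne_bot _).2 h0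
  have hcn : Nontrivial (Subgroup.center M0) := hM.center_nontrivial
  have hmn : ((Subgroup.center M0).map M0.subtype).Normal := inferInstance
  set Z := (Subgroup.center M0).map M0.subtype with hZ
  have hZcomm : ∀ z ∈ Z, ∀ m ∈ M0, m * z = z * m := by
    rintro _ ⟨z, hz, rfl⟩ m hm
    exact congrArg Subtype.val (Subgroup.mem_center_iff.1 hz ⟨m, hm⟩)
  have hZle : Z ≤ M0 := Subgroup.map_subtype_le _
  have hZn : Nontrivial Z := by
    rw [Subgroup.nontrivial_iff_ne_bot] at hcn ⊢
    rwa [Ne, hZ, Subgroup.map_eq_bot_iff_of_injective _ M0.subtype_injective]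
  letI : CommGroup Z := { (inferInstance : Group Z) with
    mul_comm := fun a b => Subtype.ext (hZcomm _ b.2 _ (hZle a.2)) }
  have hle : M0 ≤ (MulAut.conjNormal : G →* MulAut Z).ker := by
    intro m hm
    rw [MonoidHom.mem_ker]
    ext z
    rw [MulAut.conjNormal_apply, hZcomm _ z.2 m hm]
    simp
  refine ps_D (M := Z) Z.subtype Z.subtype_injective (MulAut.conjNormal : G →* MulAut Z) ?_ n hG
    hr hs ht hrs hrt hst ?_ ?_ hsG htG h1 h2 h3 hA h610
  · intro g m
    exact MulAut.conjNormal_apply g m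
  · exact hM.to_le hZle
  · rw [← Subgroup.index_ker]
    intro h
    exact hrK (h.trans (Subgroup.index_dvd_of_le hle))

lemma ps_main (c : ℕ) : ∀ (G : Type u) [Group G] [Finite G] (_ : Nat.card G = c)
    (n : ℕ) (_ : PSn n G) (p : ℕ) (_ : p.Prime) (_ : p ≠ 2) (_ : p ≠ 3) (_ : p ≠ 5)
    (_ : p ∣ Nat.card G) (_ : 3 ∣ Nat.card G) (_ : 5 ∣ Nat.card G)
    (_ : ¬ ∃ g : G, orderOf g = 3 * p) (_ : ¬ ∃ g : G, orderOf g = 5 * p)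
    (_ : ¬ ∃ g : G, orderOf g = 15)
    (_ : (¬ ∃ g : G, orderOf g = 6) ∨ (¬ ∃ g : G, orderOf g = 10)), False := by
  induction c using Nat.strong_induction_on with
  | _ c ih =>
    intro G _ _ hc n hG p hp hp2 hp3 hp5 hpG h3G h5G h3p h5p h15 h610
    rcases ps_tri n G hG with h | h | ⟨A, hA, ⟨e⟩⟩ | ⟨r, hr, M, hM, hM1, hMp⟩
    · rw [Nat.card_unique] at h3G
      norm_num at h3G
    · exact h15 h
    · exact ps_A5_normal A inferInstance e hp hp2 hp3 hp5 hpG h3p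
    · have : Fact r.Prime := ⟨hr⟩
      have hN : M.Normal := inferInstance
      have hcard := Subgroup.card_eq_card_quotient_mul_card_subgroup M
      obtain ⟨k, hk⟩ := IsPGroup.iff_card.1 hMp
      have hkey : ∀ q : ℕ, q.Prime → q ∣ Nat.card G → ¬ q ∣ Nat.card (G ⧸ M) → r = q := by
        intro q hq h1 h2
        rw [hcard] at h1
        have h3 := (hq.dvd_mul.1 h1).resolve_left h2
        rw [hk] at h3
        exact ((Nat.prime_dvd_prime_iff_eq hq hr).1 (hq.dvd_of_dvd_pow h3)).symm
      have hsurj := QuotientGroup.mk'_surjective M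
      have hp3' : ¬ ∃ g : G, orderOf g = p * 3 := by rwa [mul_comm]
      have hp5' : ¬ ∃ g : G, orderOf g = p * 5 := by rwa [mul_comm]
      by_cases hq : p ∣ Nat.card (G ⧸ M)
      swap
      · obtain rfl := hkey p hp hpG hq
        exact ps_E M hN hM1 n hG hr Nat.prime_three Nat.prime_five hp3 hp5 (by norm_num) hMp hq
          h3G h5G hp3' hp5' h15 (Or.inl ⟨rfl, rfl⟩) h610
      by_cases hq3 : 3 ∣ Nat.card (G ⧸ M)
      swap
      · obtain rfl := hkey 3 Nat.prime_three h3G hq3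
        exact ps_E M hN hM1 n hG hr hp Nat.prime_five hp3.symm (by norm_num) hp5 hMp hq3
          hpG h5G h3p h15 hp5' (Or.inr (Or.inl rfl)) h610
      by_cases hq5 : 5 ∣ Nat.card (G ⧸ M)
      swap
      · obtain rfl := hkey 5 Nat.prime_five h5G hq5
        exact ps_E M hN hM1 n hG hr hp Nat.prime_three hp5.symm (by norm_num) hp3 hMp hq5
          hpG h3G h5p h15 hp3' (Or.inr (Or.inr rfl)) h610
      refine ih (Nat.card (G ⧸ M)) ?_ (G ⧸ M) rfl n
        (PSn_surj n _ _ (QuotientGroup.mk' M) hsurj hG) p hp hp2 hp3 hp5 hq hq3 hq5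
        (ps_no_order_surj _ hsurj h3p) (ps_no_order_surj _ hsurj h5p)
        (ps_no_order_surj _ hsurj h15)
        (h610.imp (ps_no_order_surj _ hsurj) (ps_no_order_surj _ hsurj))
      rw [← hc, hcard]
      have h1 : 0 < Nat.card (G ⧸ M) := Nat.card_pos
      have h2 : 1 < Nat.card M := (Subgroup.one_lt_card_iff_ne_bot M).2 hM1
      exact lt_mul_of_one_lt_right h1 h2

/-- If `{p,3,5}` is a triangle in the prime-graph complement of a pseudo-solvable group
for some prime `p ≠ 2`, then neither `2 - 3` nor `2 - 5` is an edge of the complement: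
`G` has elements of order `6` and of order `10`. -/
theorem has_order_six_and_ten_of_p35_triangle
    (G : Type*) [Group G] [Finite G] (hG : IsPseudoSolvable G)
    (p : ℕ) (hp : p.Prime) (hp' : p ∉ ({2, 3, 5} : Set ℕ))
    (hpd : p ∣ Nat.card G) (h3d : 3 ∣ Nat.card G) (h5d : 5 ∣ Nat.card G)
    (h3p : ¬ ∃ g : G, orderOf g = 3 * p)
    (h5p : ¬ ∃ g : G, orderOf g = 5 * p)
    (h15 : ¬ ∃ g : G, orderOf g = 15) :
    (∃ g : G, orderOf g = 6) ∧ (∃ g : G, orderOf g = 10) := by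
  simp only [Set.mem_insert_iff, Set.mem_singleton_iff, not_or] at hp'
  obtain ⟨n, hn⟩ := PSn_of G hG
  have := fun h => ps_main _ G rfl n hn p hp hp'.1 hp'.2.1 hp'.2.2 hpd h3d h5d h3p h5p h15 h
  tauto
end
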